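/- arXiv:2312.01395 — 3 statements merged into one kernel-verified Lean document; each statement's English description precedes it below -/
import Mathlib

section
/- (Existence of a transition point.) Let μ be a signed Borel measure on (0,∞) with density ρ with respect to Lebesgue measure such that: ρ < 0 on (0,r₀) and ρ ≥ 0, not identically zero, on (r₀,∞) for some r₀ > 0; the function f(r) := ∫₀^∞ e^{−r²s} ρ(s) ds is defined for all r > 0 and satisfies |f(r)| = O(r^{−2−δ}) as r → ∞ for some δ > 0; and for every A > 0 the function s ↦ H(As)·ρ(s) is Lebesgue-integrable on (0,∞). Define E₂(A) := (1/2) ∫₀^∞ H(As) ρ(s) ds. Then E₂ takes both strictly positive and strictly negative values on (0,∞); in particular, by continuity there exists a transition point A* > 0 with E₂(A*) = 0. -/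
open MeasureTheory

/-- The Jacobi theta function `θ₃(q) = Σ_{j ∈ ℤ} q^(j²)`. -/
noncomputable def theta3 (q : ℝ) : ℝ := ∑' j : ℤ, q ^ (j.natAbs ^ 2)

/-- `Θ(t) := θ₃(e^{−t})`. -/
noncomputable def Θ (t : ℝ) : ℝ := theta3 (Real.exp (-t))

/-- `H(t) := t·Θ(t)·Θ'(t) + t²·Θ(t)·Θ''(t) − t²·(Θ'(t))²`. -/
noncomputable def Hfun (t : ℝ) : ℝ :=
  t * Θ t * deriv Θ t + t ^ 2 * Θ t * iteratedDeriv 2 Θ t - t ^ 2 * (deriv Θ t) ^ 2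

/-- Moments `∑ (j²)^k e^{-t j²}`. -/
noncomputable def Tm (k : ℕ) (t : ℝ) : ℝ := ∑' j : ℤ, ((j : ℝ) ^ 2) ^ k * Real.exp (-t * (j : ℝ) ^ 2)

lemma Tm_summable (k : ℕ) {t : ℝ} (ht : 0 < t) :
    Summable (fun j : ℤ => ((j : ℝ) ^ 2) ^ k * Real.exp (-t * (j : ℝ) ^ 2)) := by
  have h := summable_pow_mul_jacobiTheta₂_term_bound 0 (div_pos ht Real.pi_pos) (2 * k)
  refine h.congr fun j => ?_
  have hp := Real.pi_ne_zero
  rw [pow_mul, show ((|j| : ℤ) : ℝ) ^ 2 = (j : ℝ) ^ 2 by push_cast; exact sq_abs _]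
  congr 2
  field_simp
  ring

lemma Theta_eq (t : ℝ) : Θ t = Tm 0 t := by
  unfold Θ theta3 Tm
  refine tsum_congr fun j => ?_
  rw [← Real.exp_nat_mul]
  have : ((j.natAbs ^ 2 : ℕ) : ℝ) = (j : ℝ) ^ 2 := by
    push_cast
    rw [Nat.cast_natAbs]; push_cast; exact sq_abs _
  rw [this]; simp [mul_comm]

lemma Tm_hasDerivAt (k : ℕ) {t : ℝ} (ht : 0 < t) : HasDerivAt (Tm k) (-(Tm (k + 1) t)) t := by
  have ht2 : 0 < t / 2 := by positivity
  have h := hasDerivAt_tsum_of_isPreconnected (𝕜 := ℝ)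
    (g := fun (j : ℤ) (y : ℝ) => ((j : ℝ) ^ 2) ^ k * Real.exp (-y * (j : ℝ) ^ 2))
    (g' := fun (j : ℤ) (y : ℝ) => -(((j : ℝ) ^ 2) ^ (k + 1) * Real.exp (-y * (j : ℝ) ^ 2)))
    (t := Set.Ioi (t / 2)) (y₀ := t) (y := t)
    (Tm_summable (k + 1) ht2) isOpen_Ioi isPreconnected_Ioi ?_ ?_ (by simp; linarith)
    (Tm_summable k ht) (by simp; linarith)
  · unfold Tm
    rw [← tsum_neg]
    exact h
  · intro j y _
    have h1 : HasDerivAt (fun y : ℝ => -y * (j : ℝ) ^ 2) (-1 * (j : ℝ) ^ 2) y :=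
      ((hasDerivAt_id y).neg).mul_const _
    refine (h1.exp.const_mul (((j : ℝ) ^ 2) ^ k)).congr_deriv ?_
    ring
  · intro j y hy
    rw [norm_neg, Real.norm_of_nonneg (by positivity)]
    have : t / 2 ≤ y := le_of_lt hy
    gcongr

lemma Theta_deriv {t : ℝ} (ht : 0 < t) : deriv Θ t = -(Tm 1 t) := by
  rw [show Θ = Tm 0 from funext Theta_eq]
  exact (Tm_hasDerivAt 0 ht).deriv

lemma Theta_deriv2 {t : ℝ} (ht : 0 < t) : iteratedDeriv 2 Θ t = Tm 2 t := by
  rw [iteratedDeriv_succ, iteratedDeriv_one]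
  have : deriv Θ =ᶠ[nhds t] fun y => -(Tm 1 y) := by
    filter_upwards [Ioi_mem_nhds ht] with y hy using Theta_deriv hy
  rw [this.deriv_eq]
  have := (Tm_hasDerivAt 1 ht).neg.deriv
  simpa using this

lemma H_eq {t : ℝ} (ht : 0 < t) :
    Hfun t = -(t * Tm 0 t * Tm 1 t) + t ^ 2 * (Tm 0 t * Tm 2 t - (Tm 1 t) ^ 2) := by
  unfold Hfun
  rw [Theta_deriv ht, Theta_deriv2 ht, Theta_eq]; ring

lemma H_contAt {t : ℝ} (ht : 0 < t) : ContinuousAt Hfun t := by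
  have : Hfun =ᶠ[nhds t] fun t => -(t * Tm 0 t * Tm 1 t) + t ^ 2 * (Tm 0 t * Tm 2 t - (Tm 1 t) ^ 2) := by
    filter_upwards [Ioi_mem_nhds ht] with y hy using H_eq hy
  rw [continuousAt_congr this]
  have h0 := (Tm_hasDerivAt 0 ht).continuousAt
  have h1 := (Tm_hasDerivAt 1 ht).continuousAt
  have h2 := (Tm_hasDerivAt 2 ht).continuousAt
  fun_prop

lemma Tm_func {t : ℝ} (ht : 0 < t) : Tm 0 t = √(Real.pi / t) * Tm 0 (Real.pi ^ 2 / t) := by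
  have hp := Real.pi_pos
  have h := Real.tsum_exp_neg_mul_int_sq (div_pos ht hp)
  unfold Tm
  simp only [pow_zero, one_mul]
  rw [show √(Real.pi / t) = 1 / (t / Real.pi) ^ (1 / 2 : ℝ) by
    rw [← Real.sqrt_eq_rpow, one_div, ← Real.sqrt_inv, inv_div]]
  have e1 : ∀ j : ℤ, Real.exp (-t * (j : ℝ) ^ 2) = Real.exp (-Real.pi * (t / Real.pi) * (j : ℝ) ^ 2) := by
    intro j; congr 1; field_simp
  have e2 : ∀ j : ℤ, Real.exp (-(Real.pi ^ 2 / t) * (j : ℝ) ^ 2)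
      = Real.exp (-Real.pi / (t / Real.pi) * (j : ℝ) ^ 2) := by
    intro j; congr 1; field_simp
  simp only [e1, e2]
  exact h

lemma H_symm {t : ℝ} (ht : 0 < t) : Hfun t = (Real.pi / t) * Hfun (Real.pi ^ 2 / t) := by
  have hp := Real.pi_pos
  have hcpos : ∀ y : ℝ, 0 < y → 0 < √(Real.pi / y) := fun y hy => Real.sqrt_pos.2 (by positivity)
  have hcsq : ∀ y : ℝ, 0 < y → √(Real.pi / y) ^ 2 = Real.pi / y := fun y hy =>
    Real.sq_sqrt (by positivity)
  have hc : ∀ y : ℝ, 0 < y → HasDerivAt (fun y => √(Real.pi / y)) (-(√(Real.pi / y)) / (2 * y)) y := by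
    intro y hy
    have h1 : HasDerivAt (fun y : ℝ => Real.pi / y) (-(Real.pi / y ^ 2)) y := by
      have := (hasDerivAt_inv hy.ne').const_mul Real.pi
      refine this.congr_deriv ?_
      ring
    have h2 := h1.sqrt (by positivity)
    refine h2.congr_deriv ?_
    have := hcpos y hy
    have h3 := hcsq y hy
    field_simp
    rw [h3]; field_simp
  have hu : ∀ y : ℝ, 0 < y → HasDerivAt (fun y => Real.pi ^ 2 / y) (-(Real.pi ^ 2 / y) / y) y := by
    intro y hy
    have := (hasDerivAt_inv hy.ne').const_mul (Real.pi ^ 2)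
    refine this.congr_deriv ?_
    field_simp
  have hG : ∀ k, ∀ y : ℝ, 0 < y → HasDerivAt (fun y => Tm k (Real.pi ^ 2 / y))
      (-(Tm (k + 1) (Real.pi ^ 2 / y)) * (-(Real.pi ^ 2 / y) / y)) y := by
    intro k y hy
    exact (Tm_hasDerivAt k (by positivity : 0 < Real.pi ^ 2 / y)).comp y (hu y hy)
  -- first derivative
  have h1 : ∀ y : ℝ, 0 < y → y * Tm 1 y = √(Real.pi / y) *
      (Tm 0 (Real.pi ^ 2 / y) / 2 - (Real.pi ^ 2 / y) * Tm 1 (Real.pi ^ 2 / y)) := by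
    intro y hy
    have e : Tm 0 =ᶠ[nhds y] fun y => √(Real.pi / y) * Tm 0 (Real.pi ^ 2 / y) := by
      filter_upwards [Ioi_mem_nhds hy] with z hz using Tm_func hz
    have := (Tm_hasDerivAt 0 hy).unique (((hc y hy).mul (hG 0 y hy)).congr_of_eventuallyEq e)
    simp only [zero_add] at this
    rw [show Tm 1 y = - -Tm 1 y by ring, this]
    field_simp
    ring
  have e : (fun y => y * Tm 1 y) =ᶠ[nhds t] fun y => √(Real.pi / y) *
      (Tm 0 (Real.pi ^ 2 / y) / 2 - (Real.pi ^ 2 / y) * Tm 1 (Real.pi ^ 2 / y)) := by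
    filter_upwards [Ioi_mem_nhds ht] with z hz using h1 z hz
  have d1 := (hasDerivAt_id t).mul (Tm_hasDerivAt 1 ht)
  have d2 := (hc t ht).mul (((hG 0 t ht).div_const 2).sub ((hu t ht).mul (hG 1 t ht)))
  have h2 := d1.unique (d2.congr_of_eventuallyEq e)
  simp only [id, Pi.sub_apply, Pi.mul_apply] at h2
  rw [H_eq ht, H_eq (by positivity : 0 < Real.pi ^ 2 / t)]
  have h0 := Tm_func ht
  have h1 := h1 t ht
  have e1 : -(t * Tm 0 t * Tm 1 t) + t ^ 2 * (Tm 0 t * Tm 2 t - Tm 1 t ^ 2)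
    = -(t * Tm 0 t * (1 * Tm 1 t + t * -Tm (1 + 1) t)) - (t * Tm 1 t) ^ 2 := by norm_num; ring
  rw [e1, h2, h1, h0]
  have hs := hcsq t ht
  simp only [zero_add, Nat.reduceAdd]
  generalize √(Real.pi / t) = c at hs ⊢
  rw [← hs]
  generalize hA : Real.pi ^ 2 / t = u
  field_simp
  ring

lemma Tm0_le_two {t : ℝ} (ht : 3 ≤ t) : Tm 0 t ≤ 2 := by
  have hp := Real.pi_pos
  have hpc : (Real.pi : ℂ) ≠ 0 := by exact_mod_cast hp.ne'
  set τ : ℂ := Complex.I * ((t / Real.pi : ℝ) : ℂ) with hτ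
  have him : τ.im = t / Real.pi := by simp [hτ]
  have h := norm_jacobiTheta_sub_one_le (τ := τ) (by rw [him]; positivity)
  have e : jacobiTheta τ = ((Tm 0 t : ℝ) : ℂ) := by
    unfold jacobiTheta Tm
    rw [Complex.ofReal_tsum]
    refine tsum_congr fun j => ?_
    push_cast
    rw [pow_zero, one_mul]
    congr 1
    rw [hτ]; push_cast
    field_simp
    rw [Complex.I_sq]; ring
  rw [e, him, ← Complex.ofReal_one, ← Complex.ofReal_sub, Complex.norm_real, Real.norm_eq_abs,
    show -Real.pi * (t / Real.pi) = -t by field_simp] at h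
  have h3 : Real.exp (-t) ≤ 1 / 4 := by
    rw [Real.exp_neg, inv_le_comm₀ (Real.exp_pos _) (by norm_num)]
    have := Real.add_one_le_exp t
    norm_num; linarith
  have h4 : 2 / (1 - Real.exp (-t)) * Real.exp (-t) ≤ 1 := by
    rw [div_mul_eq_mul_div, div_le_one (by linarith)]; linarith
  have := (abs_le.1 (h.trans h4)).2
  linarith

lemma Tm_CS {t : ℝ} (ht : 0 < t) : (Tm 1 t) ^ 2 ≤ (Tm 0 t - 1) * Tm 2 t := by
  have s0 := (Tm_summable 0 ht).hasSum
  have s1 := (Tm_summable 1 ht).hasSum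
  have s2 := (Tm_summable 2 ht).hasSum
  have sd : HasSum (fun j : ℤ => if j = 0 then (1 : ℝ) else 0) 1 := hasSum_ite_eq 0 1
  have key := discrim_le_zero (a := Tm 0 t - 1) (b := -2 * Tm 1 t) (c := Tm 2 t) ?_
  · unfold discrim at key; nlinarith
  · intro x
    have := (((s0.sub sd).mul_right (x * x)).add ((s1.mul_left (-2)).mul_right x)).add s2
    refine this.nonneg fun j => ?_
    by_cases hj : j = 0
    · subst hj; simp
    · simp only [hj, if_false]
      have : 0 ≤ (x - (j : ℝ) ^ 2) ^ 2 * Real.exp (-t * (j : ℝ) ^ 2) := by positivity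
      nlinarith

lemma int_sq_ge {j : ℤ} (hj : j ≠ 0) : (1 : ℝ) ≤ (j : ℝ) ^ 2 := by
  have : 1 ≤ j ^ 2 := by
    have := sq_pos_of_ne_zero hj
    omega
  exact_mod_cast this

lemma Tm_nonneg (k : ℕ) (t : ℝ) : 0 ≤ Tm k t := tsum_nonneg fun j => by positivity

lemma Tm1_le_Tm2 {t : ℝ} (ht : 0 < t) : Tm 1 t ≤ Tm 2 t := by
  refine (Tm_summable 1 ht).tsum_le_tsum (fun j => ?_) (Tm_summable 2 ht)
  by_cases hj : j = 0
  · subst hj; simp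
  · have := int_sq_ge hj
    gcongr
    norm_num

lemma Tm1_ge {t : ℝ} (ht : 0 < t) : Real.exp (-t) ≤ Tm 1 t := by
  have := (Tm_summable 1 ht).le_tsum 1 (fun j _ => by positivity)
  simpa [Tm] using this

lemma Tm2_le {t : ℝ} (ht : 1 ≤ t) : Tm 2 t ≤ Real.exp 1 * Tm 2 1 * Real.exp (-t) := by
  have e : Real.exp 1 * Tm 2 1 * Real.exp (-t) = Real.exp (1 - t) * Tm 2 1 := by
    rw [sub_eq_add_neg, Real.exp_add]; ring
  rw [e]
  unfold Tm
  rw [← tsum_mul_left]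
  refine (Tm_summable 2 (by linarith)).tsum_le_tsum (fun j => ?_)
    ((Tm_summable 2 one_pos).mul_left _)
  by_cases hj : j = 0
  · subst hj; simp
  · have := int_sq_ge hj
    rw [mul_left_comm, ← Real.exp_add]
    gcongr
    nlinarith

lemma H_lower {t : ℝ} (ht : 3 ≤ t) : Real.exp (-t) ≤ Hfun t := by
  have ht0 : 0 < t := by linarith
  rw [H_eq ht0]
  have a := Tm0_le_two ht
  have b := Tm_CS ht0
  have c := Tm1_le_Tm2 ht0
  have d := Tm1_ge ht0
  have e := Real.exp_pos (-t)
  have f := Tm_nonneg 0 t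
  have h1 : t ^ 2 * Tm 1 t ≤ t ^ 2 * (Tm 0 t * Tm 2 t - Tm 1 t ^ 2) := by
    gcongr; linarith
  have h2 : t * Tm 0 t * Tm 1 t ≤ t * 2 * Tm 1 t := by gcongr; linarith
  have h3 : 1 * Tm 1 t ≤ (t * (t - 2)) * Tm 1 t := by
    gcongr
    · linarith
    · nlinarith
  nlinarith

lemma H_upper : ∃ K : ℝ, 0 < K ∧ ∀ t : ℝ, 3 ≤ t → Hfun t ≤ K * t ^ 2 * Real.exp (-t) := by
  refine ⟨2 * (Real.exp 1 * Tm 2 1), ?_, fun t ht => ?_⟩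
  · have := (Tm1_ge one_pos).trans (Tm1_le_Tm2 one_pos)
    have := (Real.exp_pos (-1)).trans_le this
    positivity
  · have ht0 : 0 < t := by linarith
    rw [H_eq ht0]
    have a := Tm0_le_two ht
    have f := Tm_nonneg 0 t
    have f1 := Tm_nonneg 1 t
    have f2 := Tm_nonneg 2 t
    have g := Tm2_le (by linarith : 1 ≤ t)
    have h1 : Tm 0 t * Tm 2 t ≤ 2 * (Real.exp 1 * Tm 2 1 * Real.exp (-t)) := by gcongr
    have h2 : 0 ≤ t * Tm 0 t * Tm 1 t := by positivity
    have h3 : t ^ 2 * (Tm 0 t * Tm 2 t - Tm 1 t ^ 2) ≤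
        t ^ 2 * (2 * (Real.exp 1 * Tm 2 1 * Real.exp (-t))) := by
      gcongr; nlinarith
    nlinarith

lemma u_ge {t : ℝ} (ht : 0 < t) (h : t ≤ 3) : 3 ≤ Real.pi ^ 2 / t := by
  rw [le_div_iff₀ ht]; nlinarith [Real.pi_gt_three]

lemma H_pos {t : ℝ} (ht : 0 < t) : 0 < Hfun t := by
  rcases le_total 3 t with h | h
  · exact (Real.exp_pos _).trans_le (H_lower h)
  · rw [H_symm ht]
    have := (Real.exp_pos _).trans_le (H_lower (u_ge ht h))
    have := Real.pi_pos
    positivity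

lemma H_upper_c {c : ℝ} (hc : c < 1) :
    ∃ M : ℝ, 0 < M ∧ ∀ t : ℝ, 3 ≤ t → t * Hfun t ≤ M * Real.exp (-c * t) := by
  obtain ⟨K, hK, h⟩ := H_upper
  have hd : 0 < 1 - c := by linarith
  refine ⟨K * 6 / (1 - c) ^ 3, by positivity, fun t ht => ?_⟩
  have ht0 : 0 < t := by linarith
  have h1 := Real.pow_div_factorial_le_exp (x := (1 - c) * t) (by positivity) 3
  have h2 : t ^ 3 ≤ 6 / (1 - c) ^ 3 * Real.exp ((1 - c) * t) := by
    rw [div_mul_eq_mul_div, le_div_iff₀ (by positivity)]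
    norm_num [Nat.factorial] at h1
    rw [mul_pow] at h1
    linarith
  calc t * Hfun t ≤ t * (K * t ^ 2 * Real.exp (-t)) := by gcongr; exact h t ht
    _ = K * t ^ 3 * Real.exp (-t) := by ring
    _ ≤ K * (6 / (1 - c) ^ 3 * Real.exp ((1 - c) * t)) * Real.exp (-t) := by gcongr
    _ = K * 6 / (1 - c) ^ 3 * (Real.exp ((1 - c) * t) * Real.exp (-t)) := by ring
    _ = _ := by rw [← Real.exp_add]; congr 2; ring

lemma H_upper_all : ∃ M : ℝ, 0 < M ∧ ∀ t : ℝ, 0 < t → Hfun t ≤ M * Real.exp (-t / 2) := by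
  obtain ⟨M, hM, h⟩ := H_upper_c (c := 1 / 2) (by norm_num)
  refine ⟨M * Real.exp (3 / 2), by positivity, fun t ht => ?_⟩
  have hp := Real.pi_gt_three
  rcases le_total 3 t with h3 | h3
  · have := h t h3
    have h4 := H_pos ht
    have e : (1 : ℝ) ≤ Real.exp (3 / 2) := Real.one_le_exp (by norm_num)
    calc Hfun t ≤ t * Hfun t := by nlinarith
      _ ≤ M * 1 * Real.exp (-(1 / 2) * t) := by simpa using this
      _ = M * 1 * Real.exp (-t / 2) := by congr 2; ring
      _ ≤ _ := by gcongr
  · have hu := u_ge ht h3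
    have := h _ hu
    rw [H_symm ht]
    have hpos := H_pos (by linarith : 0 < Real.pi ^ 2 / t)
    calc Real.pi / t * Hfun (Real.pi ^ 2 / t) ≤ Real.pi ^ 2 / t * Hfun (Real.pi ^ 2 / t) := by
          gcongr; nlinarith
      _ ≤ M * Real.exp (-(1 / 2) * (Real.pi ^ 2 / t)) := this
      _ ≤ M * Real.exp (3 / 2 + -t / 2) := by gcongr; linarith
      _ = _ := by rw [Real.exp_add]; ring

lemma pos_comb (F : ℝ → ℝ → ℝ) (w : ℝ → ℝ) (U : Set ℝ) (hU : MeasurableSet U) (hU0 : U ⊆ Set.Ioi 0)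
    (hUv : volume U ≠ 0) (hwU : ∀ s ∈ U, 0 < w s)
    (hw : IntegrableOn w (Set.Ioi 0)) (κ M B₀ r₀ : ℝ) (hκ : 0 < κ)
    (hF : ∀ B, B₀ ≤ B → IntegrableOn (F B) (Set.Ioi 0) ∧ ∃ a, 0 < a ∧ ∀ s, 0 < s → s ≠ r₀ →
      a * (U.indicator w s - M * Real.exp (-κ * B) * |w s|) ≤ F B s) :
    ∃ B, B₀ ≤ B ∧ 0 < ∫ s in Set.Ioi (0 : ℝ), F B s := by
  have hJ : 0 < ∫ s in U, w s := by
    rw [setIntegral_pos_iff_support_of_nonneg_ae]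
    · have : Function.support w ∩ U = U :=
        Set.inter_eq_right.2 fun s hs => (hwU s hs).ne'
      rw [this]; exact pos_iff_ne_zero.2 hUv
    · exact (ae_restrict_iff' hU).2 (Filter.Eventually.of_forall fun s hs => (hwU s hs).le)
    · exact hw.mono_set hU0
  have hlim : Filter.Tendsto (fun B : ℝ => M * Real.exp (-κ * B) * ∫ s in Set.Ioi (0 : ℝ), |w s|)
      Filter.atTop (nhds (M * 0 * ∫ s in Set.Ioi (0 : ℝ), |w s|)) := by
    refine (Filter.Tendsto.const_mul _ ?_).mul_const _
    refine Real.tendsto_exp_atBot.comp ?_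
    exact Filter.tendsto_id.const_mul_atTop_of_neg (by linarith)
  rw [mul_zero, zero_mul] at hlim
  obtain ⟨B, hB1, hB2⟩ := ((hlim.eventually_lt_const hJ).and (Filter.eventually_ge_atTop B₀)).exists
  refine ⟨B, hB2, ?_⟩
  obtain ⟨hint, a, ha, hle⟩ := hF B hB2
  have hind : IntegrableOn (U.indicator w) (Set.Ioi 0) := IntegrableOn.indicator hw hU
  have hg : IntegrableOn (fun s => a * (U.indicator w s - M * Real.exp (-κ * B) * |w s|))
      (Set.Ioi 0) := (hind.sub (hw.abs.const_mul _)).const_mul a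
  have hmono : ∫ s in Set.Ioi (0 : ℝ), a * (U.indicator w s - M * Real.exp (-κ * B) * |w s|) ≤
      ∫ s in Set.Ioi (0 : ℝ), F B s := by
    refine integral_mono_ae hg hint ?_
    refine (ae_restrict_iff' measurableSet_Ioi).2 ?_
    have : ∀ᵐ s : ℝ, s ≠ r₀ := by simp [ae_iff]
    filter_upwards [this] with s hs hs0 using hle s hs0 hs
  refine lt_of_lt_of_le ?_ hmono
  rw [integral_const_mul, integral_sub hind (hw.abs.const_mul _), integral_const_mul,
    setIntegral_indicator hU, Set.inter_eq_right.2 hU0]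
  exact mul_pos ha (by linarith)

set_option maxHeartbeats 2000000 in
theorem exists_transition_point
    (ρ : ℝ → ℝ) (hρmeas : Measurable ρ) (r₀ : ℝ) (hr₀ : 0 < r₀)
    (hneg : ∀ s ∈ Set.Ioo (0 : ℝ) r₀, ρ s < 0)
    (hnonneg : ∀ s ∈ Set.Ioi r₀, 0 ≤ ρ s)
    (hnontriv : volume {s ∈ Set.Ioi r₀ | ρ s ≠ 0} ≠ 0)
    (hfint : ∀ r : ℝ, 0 < r →
      IntegrableOn (fun s => Real.exp (-r ^ 2 * s) * ρ s) (Set.Ioi 0))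
    (f : ℝ → ℝ)
    (hf : ∀ r : ℝ, 0 < r →
      f r = ∫ s in Set.Ioi (0 : ℝ), Real.exp (-r ^ 2 * s) * ρ s)
    (hdecay : ∃ δ : ℝ, 0 < δ ∧ ∃ C R : ℝ, ∀ r : ℝ, R ≤ r → |f r| ≤ C * r ^ (-(2 + δ)))
    (hHint : ∀ A : ℝ, 0 < A →
      IntegrableOn (fun s => Hfun (A * s) * ρ s) (Set.Ioi 0))
    (E₂ : ℝ → ℝ)
    (hE₂ : ∀ A : ℝ, E₂ A = (1 / 2) * ∫ s in Set.Ioi (0 : ℝ), Hfun (A * s) * ρ s) :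
    (∃ A : ℝ, 0 < A ∧ 0 < E₂ A) ∧ (∃ A : ℝ, 0 < A ∧ E₂ A < 0) ∧
      ∃ Astar : ℝ, 0 < Astar ∧ E₂ Astar = 0 := by
  have hw : IntegrableOn (fun s => Real.exp (-s) * ρ s) (Set.Ioi 0) := by
    simpa using hfint 1 one_pos
  have hpi := Real.pi_gt_three
  have hpi2 : 9 ≤ Real.pi ^ 2 := by nlinarith
  obtain ⟨M, hM, hMb⟩ := H_upper_all
  -- rewriting in terms of the weight
  have hwe : ∀ A s, Hfun (A * s) * ρ s = (Hfun (A * s) * Real.exp s) * (Real.exp (-s) * ρ s) := by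
    intro A s
    have : Real.exp s * Real.exp (-s) = 1 := by rw [← Real.exp_add]; simp
    calc _ = Hfun (A * s) * (Real.exp s * Real.exp (-s)) * ρ s := by rw [this, mul_one]
      _ = _ := by ring
  have hposE : ∃ A : ℝ, 0 < A ∧ 0 < E₂ A := by
    obtain ⟨n, hn⟩ : ∃ n : ℕ, volume
        {s | s ∈ Set.Ioo (r₀ + 1 / ((n : ℝ) + 1)) (n : ℝ) ∧ ρ s ≠ 0} ≠ 0 := by
      by_contra! hcon
      apply hnontriv
      refine measure_mono_null ?_ (measure_iUnion_null hcon)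
      rintro s ⟨hs, hs'⟩
      obtain ⟨n1, h1⟩ := exists_nat_one_div_lt (sub_pos.2 (Set.mem_Ioi.1 hs))
      obtain ⟨n2, h2⟩ := exists_nat_gt s
      refine Set.mem_iUnion.2 ⟨max n1 n2, ⟨?_, ?_⟩, hs'⟩
      · have : 1 / (((max n1 n2 : ℕ) : ℝ) + 1) ≤ 1 / ((n1 : ℝ) + 1) := by
          gcongr; exact le_max_left _ _
        linarith
      · exact h2.trans_le (by exact_mod_cast le_max_right _ _)
    set r₁ : ℝ := r₀ + 1 / ((n : ℝ) + 1) with hr₁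
    set r₂ : ℝ := (n : ℝ)
    set U : Set ℝ := {s | s ∈ Set.Ioo r₁ r₂ ∧ ρ s ≠ 0} with hUdef
    have h01 : r₀ < r₁ := by
      have : 0 < 1 / ((n : ℝ) + 1) := by positivity
      linarith
    have hr1 : 0 < r₁ := hr₀.trans h01
    have h12 : r₁ < r₂ := by
      obtain ⟨s, hs⟩ := nonempty_of_measure_ne_zero hn
      exact hs.1.1.trans hs.1.2
    have hr2 : 0 < r₂ := hr1.trans h12
    have hUm : MeasurableSet U :=
      measurableSet_Ioo.inter (hρmeas (measurableSet_singleton (0 : ℝ)).compl)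
    set c : ℝ := (1 + r₀ / r₁) / 2 with hc
    have hc1 : r₀ / r₁ < 1 := (div_lt_one hr1).2 h01
    obtain ⟨N, hN, hNb⟩ := H_upper_c (c := c) (by linarith)
    have hc0 : 0 < c := by have : 0 < r₀ / r₁ := by positivity
                           linarith
    have hκ : 0 < Real.pi ^ 2 * (c / r₀ - 1 / r₁) := by
      have : 1 / r₁ < c / r₀ := by
        rw [lt_div_iff₀ hr₀, one_div_mul_eq_div]; linarith
      have := sub_pos.2 this
      positivity
    have hcomb := pos_comb (fun B s => Hfun (1 / B * s) * ρ s)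
      (fun s => Real.exp (-s) * ρ s) U hUm
      (fun s hs => hr1.trans hs.1.1) hn
      (fun s hs => mul_pos (Real.exp_pos _)
        (lt_of_le_of_ne (hnonneg s (h01.trans hs.1.1)) (Ne.symm hs.2))) hw
      (Real.pi ^ 2 * (c / r₀ - 1 / r₁)) (N * Real.exp r₀) r₂ r₀ hκ ?_
    · obtain ⟨B, hB, hI⟩ := hcomb
      exact ⟨1 / B, by have := hr2.trans_le hB
                       positivity, by rw [hE₂]; linarith⟩
    · intro B hB
      have hB0 : 0 < B := hr2.trans_le hB
      refine ⟨hHint (1 / B) (by positivity), Real.exp (-(Real.pi ^ 2 * B / r₁)), Real.exp_pos _, ?_⟩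
      intro s hs hsr
      have hpos : 0 < 1 / B * s := by positivity
      have hHp := H_pos hpos
      have hux : Real.pi ^ 2 / (1 / B * s) = Real.pi ^ 2 * B / s := by field_simp
      have hab : 0 ≤ N * Real.exp r₀ * Real.exp (-(Real.pi ^ 2 * (c / r₀ - 1 / r₁)) * B) *
        |Real.exp (-s) * ρ s| := by positivity
      by_cases hsU : s ∈ U
      · rw [Set.indicator_of_mem hsU, hwe]
        have hwpos : 0 ≤ Real.exp (-s) * ρ s :=
          mul_nonneg (Real.exp_pos _).le (hnonneg s (h01.trans hsU.1.1))
        have hsB : s ≤ B := hsU.1.2.le.trans hB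
        have h1 : Real.exp (-(Real.pi ^ 2 * B / r₁)) ≤ Hfun (1 / B * s) := by
          rw [H_symm hpos, hux]
          have hge : 3 ≤ Real.pi ^ 2 * B / s := by
            rw [le_div_iff₀ hs]
            have := mul_le_mul_of_nonneg_right hpi2 hB0.le
            linarith
          have h2 := H_lower hge
          have h3 : (1 : ℝ) ≤ Real.pi / (1 / B * s) := by
            rw [one_le_div hpos, one_div_mul_eq_div, div_le_iff₀ hB0]; nlinarith
          have h4 : Real.exp (-(Real.pi ^ 2 * B / r₁)) ≤ Real.exp (-(Real.pi ^ 2 * B / s)) := by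
            have := hsU.1.1.le
            gcongr
          have h5 := Real.exp_pos (-(Real.pi ^ 2 * B / r₁))
          nlinarith
        have h2 : (1 : ℝ) ≤ Real.exp s := Real.one_le_exp hs.le
        have h3 : Real.exp (-(Real.pi ^ 2 * B / r₁)) ≤ Hfun (1 / B * s) * Real.exp s := by nlinarith
        refine le_trans ?_ (mul_le_mul_of_nonneg_right h3 hwpos)
        gcongr
        linarith
      · rw [Set.indicator_of_notMem hsU, zero_sub]
        rcases lt_or_gt_of_ne hsr with hlt | hgt
        · have hρ := hneg s ⟨hs, hlt⟩
          rw [hwe]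
          have hwn : Real.exp (-s) * ρ s < 0 := mul_neg_of_pos_of_neg (Real.exp_pos _) hρ
          rw [abs_of_neg hwn]
          have h1 : Hfun (1 / B * s) * Real.exp s ≤
            Real.exp (-(Real.pi ^ 2 * B / r₁)) *
              (N * Real.exp r₀ * Real.exp (-(Real.pi ^ 2 * (c / r₀ - 1 / r₁)) * B)) := by
            have hge : 3 ≤ Real.pi ^ 2 * B / s := by
              rw [le_div_iff₀ hs]
              have := mul_le_mul_of_nonneg_right hpi2 hB0.le
              linarith
            have h2 := hNb _ hge
            have h3 : Hfun (1 / B * s) ≤ N * Real.exp (-c * (Real.pi ^ 2 * B / r₀)) := by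
              rw [H_symm hpos, hux]
              have hp := H_pos (by linarith : 0 < Real.pi ^ 2 * B / s)
              calc Real.pi / (1 / B * s) * Hfun (Real.pi ^ 2 * B / s)
                  ≤ Real.pi ^ 2 * B / s * Hfun (Real.pi ^ 2 * B / s) := by
                    refine mul_le_mul_of_nonneg_right ?_ hp.le
                    rw [show Real.pi / (1 / B * s) = Real.pi * B / s by field_simp]
                    gcongr
                    nlinarith
                _ ≤ _ := h2
                _ ≤ _ := by
                  have e : -c * (Real.pi ^ 2 * B / s) ≤ -c * (Real.pi ^ 2 * B / r₀) := by
                    have : Real.pi ^ 2 * B / r₀ ≤ Real.pi ^ 2 * B / s := by gcongr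
                    nlinarith
                  gcongr
            calc Hfun (1 / B * s) * Real.exp s
                ≤ N * Real.exp (-c * (Real.pi ^ 2 * B / r₀)) * Real.exp r₀ := by gcongr
              _ = N * Real.exp r₀ * Real.exp (-c * (Real.pi ^ 2 * B / r₀)) := by ring
              _ = N * Real.exp r₀ * Real.exp (-(Real.pi ^ 2 * B / r₁) +
                  (-(Real.pi ^ 2 * (c / r₀ - 1 / r₁)) * B)) := by
                    congr 2; ring
              _ = _ := by rw [Real.exp_add]; ring
          nlinarith
        · have : 0 ≤ Hfun (1 / B * s) * ρ s := mul_nonneg hHp.le (hnonneg s hgt)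
          have h2 := mul_nonneg (Real.exp_pos (-(Real.pi ^ 2 * B / r₁))).le hab
          linarith
  have hnegE : ∃ A : ℝ, 0 < A ∧ E₂ A < 0 := by
    have hcomb := pos_comb (fun B s => -(Hfun (B * s) * ρ s))
      (fun s => -(Real.exp (-s) * ρ s)) (Set.Ioo (r₀ / 8) (r₀ / 4)) measurableSet_Ioo
      (fun s hs => lt_trans (by positivity) hs.1)
      (by rw [Real.volume_Ioo]; simp; linarith)
      (fun s hs => by
        have := hneg s ⟨lt_trans (by positivity) hs.1, hs.2.trans (by linarith)⟩
        exact neg_pos.2 (mul_neg_of_pos_of_neg (Real.exp_pos _) this)) hw.neg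
      (r₀ / 4) (M * Real.exp r₀) (max 2 (24 / r₀)) r₀ (by positivity) ?_
    · obtain ⟨B, hB, hI⟩ := hcomb
      refine ⟨B, lt_of_lt_of_le (by norm_num) ((le_max_left _ _).trans hB), ?_⟩
      rw [integral_neg] at hI
      rw [hE₂]; linarith
    · intro B hB
      have hB2 : 2 ≤ B := (le_max_left _ _).trans hB
      have hB24 : 24 / r₀ ≤ B := (le_max_right _ _).trans hB
      rw [div_le_iff₀ hr₀] at hB24
      refine ⟨(hHint B (by linarith)).neg, Real.exp (-(B * r₀ / 4)), Real.exp_pos _, ?_⟩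
      intro s hs hsr
      have hpos : 0 < B * s := by positivity
      have hHp := H_pos hpos
      have hab : 0 ≤ M * Real.exp r₀ * Real.exp (-(r₀ / 4) * B) *
        |-(Real.exp (-s) * ρ s)| := by positivity
      have h5 := Real.exp_pos (-(B * r₀ / 4))
      by_cases hsU : s ∈ Set.Ioo (r₀ / 8) (r₀ / 4)
      · rw [Set.indicator_of_mem hsU, hwe]
        have hwpos : 0 ≤ -(Real.exp (-s) * ρ s) := by
          have := hneg s ⟨hs, hsU.2.trans (by linarith)⟩
          exact (neg_pos.2 (mul_neg_of_pos_of_neg (Real.exp_pos _) this)).le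
        have h1 : Real.exp (-(B * r₀ / 4)) ≤ Hfun (B * s) := by
          refine le_trans ?_ (H_lower (by nlinarith [hsU.1]))
          have := hsU.2
          gcongr
          nlinarith
        have h2 : (1 : ℝ) ≤ Real.exp s := Real.one_le_exp hs.le
        have h3 : Real.exp (-(B * r₀ / 4)) ≤ Hfun (B * s) * Real.exp s := by nlinarith
        refine le_trans ?_ ((mul_le_mul_of_nonneg_right h3 hwpos).trans (le_of_eq (by ring)))
        gcongr
        linarith
      · rw [Set.indicator_of_notMem hsU, zero_sub]
        rcases lt_or_gt_of_ne hsr with hlt | hgt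
        · have : Hfun (B * s) * ρ s < 0 := mul_neg_of_pos_of_neg hHp (hneg s ⟨hs, hlt⟩)
          have h2 := mul_nonneg h5.le hab
          linarith
        · have hρ := hnonneg s hgt
          rw [hwe]
          have hwn : 0 ≤ Real.exp (-s) * ρ s := by positivity
          rw [abs_neg, abs_of_nonneg hwn]
          have h1 : Hfun (B * s) * Real.exp s ≤ Real.exp (-(B * r₀ / 4)) *
              (M * Real.exp r₀ * Real.exp (-(r₀ / 4) * B)) := by
            calc Hfun (B * s) * Real.exp s ≤ M * Real.exp (-(B * s) / 2) * Real.exp s := by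
                  gcongr; exact hMb _ hpos
              _ = M * Real.exp (-(B * s) / 2 + s) := by rw [Real.exp_add]; ring
              _ ≤ M * Real.exp (-(B * r₀ / 4) + r₀ + -(r₀ / 4) * B) := by
                  have : r₀ < s := hgt
                  refine mul_le_mul_of_nonneg_left (Real.exp_le_exp.2 ?_) hM.le
                  nlinarith
              _ = _ := by rw [Real.exp_add, Real.exp_add]; ring
          nlinarith
  refine ⟨hposE, hnegE, ?_⟩
  have hcont : ContinuousOn E₂ (Set.Ioi 0) := by
    intro A hA
    have hA : 0 < A := hA
    refine ContinuousAt.continuousWithinAt ?_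
    rw [show E₂ = fun A => (1 / 2) * ∫ s in Set.Ioi (0 : ℝ), Hfun (A * s) * ρ s from funext hE₂]
    refine ContinuousAt.const_mul ?_ _
    have hbint : IntegrableOn (fun s => M * |Real.exp (-(√(A / 4)) ^ 2 * s) * ρ s|) (Set.Ioi 0) :=
      (hfint _ (Real.sqrt_pos.2 (by positivity))).abs.const_mul M
    refine continuousAt_of_dominated ?_ ?_ hbint ?_
    · filter_upwards [Ioi_mem_nhds hA] with y hy using (hHint y hy).aestronglyMeasurable
    · filter_upwards [Ioi_mem_nhds (by linarith : A / 2 < A)] with y hy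
      have hy : A / 2 < y := hy
      refine (ae_restrict_iff' measurableSet_Ioi).2 (Filter.Eventually.of_forall fun s hs => ?_)
      have hs : 0 < s := hs
      have hys : 0 < y * s := mul_pos (by linarith) hs
      rw [Real.norm_eq_abs, abs_mul, abs_mul, abs_of_pos (H_pos hys), Real.abs_exp, ← mul_assoc,
        Real.sq_sqrt (by positivity)]
      gcongr
      refine (hMb _ hys).trans ?_
      gcongr
      nlinarith
    · refine (ae_restrict_iff' measurableSet_Ioi).2 (Filter.Eventually.of_forall fun s hs => ?_)
      have hs : 0 < s := hs
      have h1 : ContinuousAt Hfun (A * s) := H_contAt (by positivity)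
      have h2 : ContinuousAt (fun y : ℝ => Hfun (y * s)) A :=
        ContinuousAt.comp (f := fun y : ℝ => y * s) h1 (by fun_prop)
      exact h2.mul_const _
  obtain ⟨A, hA, hAp⟩ := hposE
  obtain ⟨B, hB, hBn⟩ := hnegE
  obtain ⟨C, hC, hC0⟩ := isPreconnected_Ioi.intermediate_value (Set.mem_Ioi.2 hB) (Set.mem_Ioi.2 hA)
    hcont ⟨hBn.le, hAp.le⟩
  exact ⟨C, hC, hC0⟩
end

section
/- (Asymptotics at a tricritical point.) Let G : ℝ × ℝ → ℝ be C⁸ on a neighborhood of (Aᵗ, 0), with G(A, −ε) = G(A, ε) for all (A, ε) in that neighborhood. Define E₂(A) := (1/2)·∂²G/∂ε²(A,0), E₄(A) := (1/24)·∂⁴G/∂ε⁴(A,0) and E₆(A) := (1/720)·∂⁶G/∂ε⁶(A,0), and assume E₂(Aᵗ) = 0, E₄(Aᵗ) = 0, E₂'(Aᵗ) < 0 and E₆(Aᵗ) > 0. Then there exist δ > 0 and a continuous function ε̄ : (Aᵗ, Aᵗ + δ) → (0,∞) such that for each A ∈ (Aᵗ, Aᵗ + δ), ε̄(A) is a critical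 point of ε ↦ G(A, ε), and ε̄(A)/(A − Aᵗ)^{1/4} → ( −E₂'(Aᵗ) / (3·E₆(Aᵗ)) )^{1/4} as A → (Aᵗ)⁺. In particular the critical exponent at the tricritical point is 1/4. -/
open Filter Topology

lemma tp_branch (a x0 δ η : ℝ) (hδ : 0 < δ) (hη : 0 < η) (Φ : ℝ → ℝ → ℝ)
    (hmono : ∀ A ∈ Set.Ioo a (a + δ), StrictMonoOn (Φ A) (Set.Icc (x0 - η) (x0 + η)))
    (hcx : ∀ A ∈ Set.Ioo a (a + δ), ContinuousOn (Φ A) (Set.Icc (x0 - η) (x0 + η)))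
    (hcA : ∀ x ∈ Set.Icc (x0 - η) (x0 + η), ContinuousOn (fun A => Φ A x) (Set.Ioo a (a + δ)))
    (hneg : ∀ x ∈ Set.Ico (x0 - η) x0, ∀ᶠ A in 𝓝[>] a, Φ A x < 0)
    (hpos : ∀ x ∈ Set.Ioc x0 (x0 + η), ∀ᶠ A in 𝓝[>] a, 0 < Φ A x) :
    ∃ δ' : ℝ, 0 < δ' ∧ δ' ≤ δ ∧ ∃ X : ℝ → ℝ, ContinuousOn X (Set.Ioo a (a + δ')) ∧
      (∀ A ∈ Set.Ioo a (a + δ'), X A ∈ Set.Icc (x0 - η) (x0 + η) ∧ Φ A (X A) = 0) ∧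
      Tendsto X (𝓝[>] a) (𝓝 x0) := by
  have h1 := (hneg (x0 - η) ⟨le_refl _, by linarith⟩).and
    (hpos (x0 + η) ⟨by linarith, le_refl _⟩)
  obtain ⟨b, hb, hb'⟩ := (mem_nhdsGT_iff_exists_Ioo_subset).1 h1
  have hab : a < b := hb
  refine ⟨min δ (b - a), lt_min hδ (by linarith), min_le_left _ _, ?_⟩
  set δ' := min δ (b - a) with hδ'
  have hl1 : δ' ≤ δ := min_le_left _ _
  have hl2 : δ' ≤ b - a := min_le_right _ _
  have hδpos : 0 < δ' := lt_min hδ (by linarith)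
  have hsub : ∀ A ∈ Set.Ioo a (a + δ'), A ∈ Set.Ioo a (a + δ) := fun A hA =>
    ⟨hA.1, by linarith [hA.2]⟩
  have hex : ∀ A, ∃ x, A ∈ Set.Ioo a (a + δ') →
      x ∈ Set.Icc (x0 - η) (x0 + η) ∧ Φ A x = 0 := by
    intro A
    by_cases hA : A ∈ Set.Ioo a (a + δ')
    · have h2 : A ∈ Set.Ioo a b := ⟨hA.1, by linarith [hA.2]⟩
      obtain ⟨n1, n2⟩ := hb' h2
      obtain ⟨x, hx, hx'⟩ := intermediate_value_Icc (by linarith) (hcx A (hsub A hA))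
        (show (0 : ℝ) ∈ Set.Icc _ _ from ⟨n1.le, n2.le⟩)
      exact ⟨x, fun _ => ⟨hx, hx'⟩⟩
    · exact ⟨0, fun h => absurd h hA⟩
  choose X hX using hex
  have key1 : ∀ A ∈ Set.Ioo a (a + δ'), ∀ c ∈ Set.Icc (x0 - η) (x0 + η), Φ A c < 0 → c < X A := by
    intro A hA c hc h
    by_contra hcon
    have := (hmono A (hsub A hA)).monotoneOn (hX A hA).1 hc (not_lt.1 hcon)
    linarith [(hX A hA).2]
  have key2 : ∀ A ∈ Set.Ioo a (a + δ'), ∀ c ∈ Set.Icc (x0 - η) (x0 + η), 0 < Φ A c → X A < c := by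
    intro A hA c hc h
    by_contra hcon
    have := (hmono A (hsub A hA)).monotoneOn hc (hX A hA).1 (not_lt.1 hcon)
    linarith [(hX A hA).2]
  refine ⟨X, ?_, fun A hA => hX A hA, ?_⟩
  · intro A0 hA0
    obtain ⟨⟨m1, m2⟩, m3⟩ := hX A0 hA0
    have hmem : ∀ᶠ A in 𝓝[Set.Ioo a (a + δ')] A0, A ∈ Set.Ioo a (a + δ') := self_mem_nhdsWithin
    refine tendsto_order.2 ⟨fun c hc => ?_, fun c hc => ?_⟩
    · by_cases hc2 : c < x0 - η
      · filter_upwards [hmem] with A hA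
        exact lt_of_lt_of_le hc2 (hX A hA).1.1
      · have hcI : c ∈ Set.Icc (x0 - η) (x0 + η) := ⟨not_lt.1 hc2, by linarith⟩
        have h3 := hmono A0 (hsub _ hA0) hcI (hX A0 hA0).1 hc
        rw [m3] at h3
        have h4 := ((hcA c hcI A0 (hsub _ hA0)).mono hsub).eventually (gt_mem_nhds h3)
        filter_upwards [hmem, h4] with A hA h5
        exact key1 A hA c hcI h5
    · by_cases hc2 : x0 + η < c
      · filter_upwards [hmem] with A hA
        exact lt_of_le_of_lt (hX A hA).1.2 hc2
      · have hcI : c ∈ Set.Icc (x0 - η) (x0 + η) := ⟨by linarith, not_lt.1 hc2⟩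
        have h3 := hmono A0 (hsub _ hA0) (hX A0 hA0).1 hcI hc
        rw [m3] at h3
        have h4 := ((hcA c hcI A0 (hsub _ hA0)).mono hsub).eventually (lt_mem_nhds h3)
        filter_upwards [hmem, h4] with A hA h5
        exact key2 A hA c hcI h5
  · have hmem : ∀ᶠ A in 𝓝[>] a, A ∈ Set.Ioo a (a + δ') :=
      Ioo_mem_nhdsGT (by linarith)
    refine tendsto_order.2 ⟨fun c hc => ?_, fun c hc => ?_⟩
    · by_cases hc2 : c < x0 - η
      · filter_upwards [hmem] with A hA
        exact lt_of_lt_of_le hc2 (hX A hA).1.1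
      · filter_upwards [hmem, hneg c ⟨not_lt.1 hc2, hc⟩] with A hA h5
        exact key1 A hA c ⟨not_lt.1 hc2, by linarith⟩ h5
    · by_cases hc2 : x0 + η < c
      · filter_upwards [hmem] with A hA
        exact lt_of_le_of_lt (hX A hA).1.2 hc2
      · filter_upwards [hmem, hpos c ⟨hc, not_lt.1 hc2⟩] with A hA h5
        exact key2 A hA c ⟨by linarith, not_lt.1 hc2⟩ h5

lemma tp_deriv (n m : WithTop ℕ∞) (hnm : n + 1 ≤ m) (F : ℝ × ℝ → ℝ) (W : Set (ℝ × ℝ)) (hW : IsOpen W)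
    (hF : ContDiffOn ℝ m F W) :
    ContDiffOn ℝ n (fun p : ℝ × ℝ => deriv (fun e => F (p.1, e)) p.2) W := by
  have h1 : ContDiffOn ℝ n (fun p => fderiv ℝ F p ((0, 1) : ℝ × ℝ)) W :=
    (hF.fderiv_of_isOpen hW hnm).clm_apply contDiffOn_const
  refine h1.congr fun p hp => ?_
  have hm : m ≠ 0 := by
    rintro rfl
    simp at hnm
  have hd : HasFDerivAt F (fderiv ℝ F p) p :=
    ((hF.contDiffAt (hW.mem_nhds hp)).differentiableAt hm).hasFDerivAt
  have h2 : HasDerivAt (fun e : ℝ => (p.1, e)) ((0, 1) : ℝ × ℝ) p.2 :=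
    (hasDerivAt_const _ _).prodMk (hasDerivAt_id _)
  exact (HasFDerivAt.comp_hasDerivAt (x := p.2) (f := fun e : ℝ => (p.1, e)) hd h2).deriv

lemma tp_iter (G : ℝ × ℝ → ℝ) (W : Set (ℝ × ℝ)) (hW : IsOpen W)
    (hG : ContDiffOn ℝ 8 G W) (k : ℕ) (j : ℕ) (hk : k + j = 8) :
    ContDiffOn ℝ j (fun p : ℝ × ℝ => iteratedDeriv k (fun e => G (p.1, e)) p.2) W := by
  induction k generalizing j with
  | zero =>
    obtain rfl : j = 8 := by omega
    simpa using hG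
  | succ k ih =>
    have := tp_deriv j (j + 1 : ℕ) (by norm_cast) _ W hW (ih (j + 1) (by omega))
    simpa only [iteratedDeriv_succ] using this

lemma tp_odd (f : ℝ → ℝ) (hf : ∀ᶠ e in 𝓝 (0 : ℝ), f (-e) = f e) (k : ℕ) (hk : Odd k) :
    iteratedDeriv k f 0 = 0 := by
  have h1 : iteratedDeriv k (fun e => f (-e)) 0 = iteratedDeriv k f 0 :=
    Filter.EventuallyEq.iteratedDeriv_eq k hf
  rw [iteratedDeriv_comp_neg] at h1
  simp [hk.neg_one_pow] at h1
  linarith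

lemma tp_taylor (f : ℝ → ℝ) (n : ℕ) (x : ℝ) (hx : 0 < x)
    (hf : ∀ y ∈ Set.Icc 0 x, ContDiffAt ℝ (n + 1 : ℕ) f y) :
    ∃ ξ ∈ Set.Ioo 0 x, f x = ∑ k ∈ Finset.range (n + 1),
      ((k.factorial : ℝ)⁻¹ * x ^ k) * iteratedDeriv k f 0
      + iteratedDeriv (n + 1) f ξ * x ^ (n + 1) / (n + 1).factorial := by
  have hu : UniqueDiffOn ℝ (Set.Icc 0 x) := uniqueDiffOn_Icc hx
  have hI : Set.uIcc 0 x = Set.Icc 0 x := Set.uIcc_of_le hx.le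
  have hII : Set.uIoo 0 x = Set.Ioo 0 x := Set.uIoo_of_le hx.le
  have hc : ContDiffOn ℝ (n + 1 : ℕ) f (Set.Icc 0 x) := fun y hy => (hf y hy).contDiffWithinAt
  have hn : (n : WithTop ℕ∞) < ((n + 1 : ℕ) : WithTop ℕ∞) := by exact_mod_cast Nat.lt_succ_self n
  obtain ⟨ξ, hξ, h⟩ := taylor_mean_remainder_lagrange (f := f) (n := n) hx.ne
    (by rw [hI]; exact hc.of_le hn.le)
    (by
      rw [hI, hII]
      exact (hc.differentiableOn_iteratedDerivWithin hn hu).mono Set.Ioo_subset_Icc_self)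
  rw [hII] at hξ
  rw [hI, taylor_within_apply] at h
  refine ⟨ξ, hξ, ?_⟩
  rw [iteratedDerivWithin_eq_iteratedDeriv hu (hf ξ (Set.Ioo_subset_Icc_self hξ))
    (Set.Ioo_subset_Icc_self hξ)] at h
  have h0 : (0 : ℝ) ∈ Set.Icc 0 x := ⟨le_refl _, hx.le⟩
  have hs : ∑ k ∈ Finset.range (n + 1),
      ((k.factorial : ℝ)⁻¹ * (x - 0) ^ k) • iteratedDerivWithin k f (Set.Icc 0 x) 0 =
      ∑ k ∈ Finset.range (n + 1), ((k.factorial : ℝ)⁻¹ * x ^ k) * iteratedDeriv k f 0 := by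
    refine Finset.sum_congr rfl fun k hk => ?_
    rw [iteratedDerivWithin_eq_iteratedDeriv hu ((hf 0 h0).of_le ?_) h0]
    · simp
    · exact_mod_cast (Finset.mem_range.1 hk).le
  rw [hs, sub_zero] at h
  linarith

lemma tp_t_tendsto (a : ℝ) : Tendsto (fun A : ℝ => (A - a) ^ ((1 : ℝ) / 4)) (𝓝[>] a) (𝓝 0) := by
  have h : ContinuousAt (fun A : ℝ => (A - a) ^ ((1 : ℝ) / 4)) a :=
    (continuousAt_id.sub continuousAt_const).rpow_const (Or.inr (by norm_num))
  have h2 := h.tendsto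
  simp only [sub_self] at h2
  rw [Real.zero_rpow (by norm_num)] at h2
  exact h2.mono_left nhdsWithin_le_nhds

lemma tp_t_pow (y : ℝ) (hy : 0 ≤ y) : (y ^ ((1 : ℝ) / 4)) ^ 4 = y := by
  rw [← Real.rpow_natCast, ← Real.rpow_mul hy]
  norm_num

lemma tp_slope (f : ℝ → ℝ) (a : ℝ) (hf : DifferentiableAt ℝ f a) (h0 : f a = 0) :
    Tendsto (fun A => f A / ((A - a) ^ ((1 : ℝ) / 4)) ^ 4) (𝓝[>] a) (𝓝 (deriv f a)) := by
  have h := (hasDerivAt_iff_tendsto_slope.1 hf.hasDerivAt).mono_left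
    (nhdsWithin_mono a (fun x hx => ne_of_gt hx) : 𝓝[>] a ≤ 𝓝[≠] a)
  refine h.congr' ?_
  filter_upwards [self_mem_nhdsWithin] with A hA
  rw [tp_t_pow _ (sub_nonneg.2 (le_of_lt hA)), slope_def_field, h0, sub_zero]

theorem tricritical_point_asymptotics
    (G : ℝ × ℝ → ℝ) (At : ℝ) (U : Set (ℝ × ℝ)) (hU : U ∈ 𝓝 ((At, 0) : ℝ × ℝ))
    (hG : ContDiffOn ℝ 8 G U)
    (heven : ∀ A ε : ℝ, (A, ε) ∈ U → G (A, -ε) = G (A, ε))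
    (E₂ E₄ E₆ : ℝ → ℝ)
    (hE₂ : ∀ A : ℝ, E₂ A = (1 / 2) * iteratedDeriv 2 (fun ε => G (A, ε)) 0)
    (hE₄ : ∀ A : ℝ, E₄ A = (1 / 24) * iteratedDeriv 4 (fun ε => G (A, ε)) 0)
    (hE₆ : ∀ A : ℝ, E₆ A = (1 / 720) * iteratedDeriv 6 (fun ε => G (A, ε)) 0)
    (hzero₂ : E₂ At = 0) (hzero₄ : E₄ At = 0)
    (hslope : deriv E₂ At < 0) (hE₆pos : 0 < E₆ At) :
    ∃ δ : ℝ, 0 < δ ∧ ∃ εbar : ℝ → ℝ,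
      ContinuousOn εbar (Set.Ioo At (At + δ)) ∧
      (∀ A ∈ Set.Ioo At (At + δ),
        0 < εbar A ∧ deriv (fun ε => G (A, ε)) (εbar A) = 0) ∧
      Tendsto (fun A => εbar A / (A - At) ^ ((1 : ℝ) / 4)) (𝓝[>] At)
        (𝓝 ((-(deriv E₂ At) / (3 * E₆ At)) ^ ((1 : ℝ) / 4))) := by
  obtain ⟨D, hD⟩ : ∃ D : ℕ → ℝ → ℝ → ℝ, D = fun k A => iteratedDeriv k (fun e => G (A, e)) :=
    ⟨_, rfl⟩
  have hDk : ∀ k A, iteratedDeriv k (fun e => G (A, e)) = D k A := fun k A => by rw [hD]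
  obtain ⟨r, hr, hball⟩ := Metric.isOpen_iff.1 isOpen_interior _ (mem_interior_iff_mem_nhds.2 hU)
  have hbox : ∀ A e, |A - At| < r → |e| < r → (A, e) ∈ interior U := by
    intro A e h1 h2
    refine hball ?_
    rw [Metric.mem_ball, Prod.dist_eq, max_lt_iff, Real.dist_eq, Real.dist_eq]
    exact ⟨h1, by simpa using h2⟩
  have hc : ∀ k j : ℕ, k + j = 8 →
      ContDiffOn ℝ j (fun p : ℝ × ℝ => D k p.1 p.2) (interior U) := by
    intro k j hkj
    subst hD
    exact tp_iter G _ isOpen_interior (hG.mono interior_subset) k j hkj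
  have hcA : ∀ k j : ℕ, k + j = 8 → ∀ A e, |A - At| < r → |e| < r →
      ContDiffAt ℝ j (D k A) e := by
    intro k j hkj A e h1 h2
    have h3 := (hc k j hkj).contDiffAt (isOpen_interior.mem_nhds (hbox A e h1 h2))
    exact ContDiffAt.comp (f := fun e : ℝ => (A, e)) e h3 (contDiffAt_const.prodMk contDiffAt_id)
  have hadd : ∀ k A, iteratedDeriv k (D 1 A) = D (k + 1) A := by
    intro k A
    rw [← hDk, ← hDk, iteratedDeriv_one, iteratedDeriv_succ']
  have hadd2 : ∀ k A, iteratedDeriv k (D 2 A) = D (k + 2) A := by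
    intro k A
    rw [← hDk, ← hDk, iteratedDeriv_succ', iteratedDeriv_one, iteratedDeriv_succ',
      iteratedDeriv_succ']
  have hodd : ∀ A, |A - At| < r → ∀ k, Odd k → D k A 0 = 0 := by
    intro A hA k hk
    rw [← hDk]
    refine tp_odd _ ?_ k hk
    filter_upwards [Metric.ball_mem_nhds (0 : ℝ) hr] with e he
    exact heven A e (interior_subset (hbox A e hA (by simpa using he)))
  have T1 : ∀ A e, ∃ ξ, |A - At| < r → 0 < e → e < r → 0 < ξ ∧ ξ < e ∧
      D 1 A e = D 2 A 0 * e + D 4 A 0 / 6 * e ^ 3 + D 6 A ξ / 120 * e ^ 5 := by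
    intro A e
    by_cases h : |A - At| < r ∧ 0 < e ∧ e < r
    · obtain ⟨h1, h2, h3⟩ := h
      obtain ⟨ξ, hξ, h4⟩ := tp_taylor (D 1 A) 4 e h2 (fun y hy =>
        (hcA 1 7 rfl A y h1 (by rw [abs_of_nonneg hy.1]; linarith [hy.2])).of_le
          (by exact_mod_cast (by norm_num : 5 ≤ 7)))
      refine ⟨ξ, fun _ _ _ => ⟨hξ.1, hξ.2, ?_⟩⟩
      rw [h4]
      simp only [hadd, Finset.sum_range_succ, Finset.sum_range_zero, Nat.factorial]
      norm_num
      rw [hodd A h1 1 (by decide), hodd A h1 3 (by decide), hodd A h1 5 (by decide)]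
      ring
    · exact ⟨0, fun h1 h2 h3 => absurd ⟨h1, h2, h3⟩ h⟩
  have T2 : ∀ A e, ∃ ξ, |A - At| < r → 0 < e → e < r → 0 < ξ ∧ ξ < e ∧
      D 2 A e = D 2 A 0 + D 4 A 0 / 2 * e ^ 2 + D 6 A ξ / 24 * e ^ 4 := by
    intro A e
    by_cases h : |A - At| < r ∧ 0 < e ∧ e < r
    · obtain ⟨h1, h2, h3⟩ := h
      obtain ⟨ξ, hξ, h4⟩ := tp_taylor (D 2 A) 3 e h2 (fun y hy =>
        (hcA 2 6 rfl A y h1 (by rw [abs_of_nonneg hy.1]; linarith [hy.2])).of_le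
          (by exact_mod_cast (by norm_num : 4 ≤ 6)))
      refine ⟨ξ, fun _ _ _ => ⟨hξ.1, hξ.2, ?_⟩⟩
      rw [h4]
      simp only [hadd2, Finset.sum_range_succ, Finset.sum_range_zero, Nat.factorial]
      norm_num
      rw [hodd A h1 3 (by decide), hodd A h1 5 (by decide)]
      ring
    · exact ⟨0, fun h1 h2 h3 => absurd ⟨h1, h2, h3⟩ h⟩
  choose ξ₁ hξ₁ using T1
  choose ξ₂ hξ₂ using T2
  obtain ⟨t, ht⟩ : ∃ t : ℝ → ℝ, t = fun A => (A - At) ^ ((1 : ℝ) / 4) := ⟨_, rfl⟩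
  have htA : ∀ A, (A - At) ^ ((1 : ℝ) / 4) = t A := fun A => by rw [ht]
  have tpos : ∀ A, At < A → 0 < t A := fun A hA => by
    rw [← htA]; exact Real.rpow_pos_of_pos (sub_pos.2 hA) _
  have tlim : Tendsto t (𝓝[>] At) (𝓝 0) := by rw [ht]; exact tp_t_tendsto At
  have tcont : Continuous t := by
    rw [ht]
    exact (continuous_id.sub continuous_const).rpow_const (fun _ => Or.inr (by norm_num))
  have L2 : Tendsto (fun A => D 2 A 0 / t A ^ 4) (𝓝[>] At) (𝓝 (2 * deriv E₂ At)) := by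
    have h := (tp_slope E₂ At (differentiableAt_of_deriv_ne_zero hslope.ne) hzero₂).const_mul 2
    refine h.congr fun A => ?_
    rw [htA, hE₂, hDk]; ring
  have L4 : Tendsto (fun A => D 4 A 0 / t A ^ 2) (𝓝[>] At) (𝓝 0) := by
    have hd : DifferentiableAt ℝ (fun A => D 4 A 0) At := by
      have h3 := (hc 4 4 rfl).contDiffAt (isOpen_interior.mem_nhds
        (hbox At 0 (by simpa using hr) (by simpa using hr)))
      have h4 : DifferentiableAt ℝ (fun p : ℝ × ℝ => D 4 p.1 p.2) (At, 0) :=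
        h3.differentiableAt (by norm_num)
      exact DifferentiableAt.comp (f := fun A : ℝ => (A, (0 : ℝ))) At h4
        (differentiableAt_id.prodMk (differentiableAt_const _))
    have h0 : D 4 At 0 = 0 := by
      have := hE₄ At
      rw [hzero₄, hDk] at this; linarith
    have h := (tp_slope _ At hd h0).mul (tlim.pow 2)
    simp only [htA] at h
    simp only [ne_eq, OfNat.ofNat_ne_zero, not_false_eq_true, zero_pow, mul_zero] at h
    refine h.congr' ?_
    filter_upwards [self_mem_nhdsWithin] with A hA
    have := (tpos A hA).ne'
    field_simp
  have h60 : D 6 At 0 = 720 * E₆ At := by rw [hE₆, hDk]; ring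
  -- general facts on the product filter
  have P1 : ∀ x₀ : ℝ, Tendsto (fun p : ℝ × ℝ => t p.1 * p.2) (𝓝[>] At ×ˢ 𝓝 x₀) (𝓝 0) := by
    intro x₀
    simpa using (tlim.comp tendsto_fst).mul (tendsto_snd (f := 𝓝[>] At) (g := 𝓝 x₀))
  have PE : ∀ x₀ : ℝ, 0 < x₀ → ∀ᶠ p : ℝ × ℝ in 𝓝[>] At ×ˢ 𝓝 x₀,
      At < p.1 ∧ |p.1 - At| < r ∧ 0 < p.2 ∧ 0 < t p.1 * p.2 ∧ t p.1 * p.2 < r := by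
    intro x₀ hx₀
    have e1 : ∀ᶠ p : ℝ × ℝ in 𝓝[>] At ×ˢ 𝓝 x₀, p.1 ∈ Set.Ioo At (At + r) :=
      tendsto_fst.eventually (Ioo_mem_nhdsGT (by linarith))
    have e2 : ∀ᶠ p : ℝ × ℝ in 𝓝[>] At ×ˢ 𝓝 x₀, 0 < p.2 :=
      tendsto_snd.eventually (lt_mem_nhds hx₀)
    filter_upwards [e1, e2, (P1 x₀).eventually (gt_mem_nhds hr)] with p h1 h2 h3
    exact ⟨h1.1, by rw [abs_of_pos (by linarith [h1.1])]; linarith [h1.2], h2,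
      mul_pos (tpos _ h1.1) h2, h3⟩
  have P6 : ∀ x₀ : ℝ, 0 < x₀ → ∀ ξ : ℝ → ℝ → ℝ,
      (∀ A e, |A - At| < r → 0 < e → e < r → 0 < ξ A e ∧ ξ A e < e) →
      Tendsto (fun p : ℝ × ℝ => D 6 p.1 (ξ p.1 (t p.1 * p.2))) (𝓝[>] At ×ˢ 𝓝 x₀)
        (𝓝 (720 * E₆ At)) := by
    intro x₀ hx₀ ξ hξ
    have hx : Tendsto (fun p : ℝ × ℝ => ξ p.1 (t p.1 * p.2)) (𝓝[>] At ×ˢ 𝓝 x₀) (𝓝 0) := by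
      refine tendsto_of_tendsto_of_tendsto_of_le_of_le' tendsto_const_nhds (P1 x₀) ?_ ?_
      · filter_upwards [PE x₀ hx₀] with p hp
        exact (hξ _ _ hp.2.1 hp.2.2.2.1 hp.2.2.2.2).1.le
      · filter_upwards [PE x₀ hx₀] with p hp
        exact (hξ _ _ hp.2.1 hp.2.2.2.1 hp.2.2.2.2).2.le
    have hA : Tendsto (fun p : ℝ × ℝ => p.1) (𝓝[>] At ×ˢ 𝓝 x₀) (𝓝 At) :=
      (tendsto_fst (f := 𝓝[>] At) (g := 𝓝 x₀)).mono_right nhdsWithin_le_nhds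
    have h6 : ContinuousAt (fun p : ℝ × ℝ => D 6 p.1 p.2) (At, 0) :=
      (hc 6 2 rfl).continuousOn.continuousAt (isOpen_interior.mem_nhds
        (hbox At 0 (by simpa using hr) (by simpa using hr)))
    have h7 := h6.tendsto.comp (hA.prodMk_nhds hx)
    rw [← h60]
    exact h7
  have Q1 : ∀ x₀ : ℝ, 0 < x₀ → Tendsto (fun p : ℝ × ℝ => D 1 p.1 (t p.1 * p.2) / t p.1 ^ 5)
      (𝓝[>] At ×ˢ 𝓝 x₀) (𝓝 (2 * deriv E₂ At * x₀ + 6 * E₆ At * x₀ ^ 5)) := by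
    intro x₀ hx₀
    have hs : Tendsto (fun p : ℝ × ℝ => p.2) (𝓝[>] At ×ˢ 𝓝 x₀) (𝓝 x₀) := tendsto_snd
    have h6 := P6 x₀ hx₀ ξ₁ (fun A e a b c => ⟨(hξ₁ A e a b c).1, (hξ₁ A e a b c).2.1⟩)
    have h2 := L2.comp (tendsto_fst (f := 𝓝[>] At) (g := 𝓝 x₀))
    have h4 := L4.comp (tendsto_fst (f := 𝓝[>] At) (g := 𝓝 x₀))
    have h := ((h2.mul hs).add ((h4.div_const 6).mul (hs.pow 3))).add
      ((h6.div_const 120).mul (hs.pow 5))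
    have e : 2 * deriv E₂ At * x₀ + 0 / 6 * x₀ ^ 3 + 720 * E₆ At / 120 * x₀ ^ 5 =
      2 * deriv E₂ At * x₀ + 6 * E₆ At * x₀ ^ 5 := by ring
    rw [e] at h
    refine h.congr' ?_
    filter_upwards [PE x₀ hx₀] with p hp
    rw [(hξ₁ _ _ hp.2.1 hp.2.2.2.1 hp.2.2.2.2).2.2]
    have := (tpos _ hp.1).ne'
    simp only [Function.comp]
    field_simp
  have Q2 : ∀ x₀ : ℝ, 0 < x₀ → Tendsto (fun p : ℝ × ℝ => D 2 p.1 (t p.1 * p.2) / t p.1 ^ 4)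
      (𝓝[>] At ×ˢ 𝓝 x₀) (𝓝 (2 * deriv E₂ At + 30 * E₆ At * x₀ ^ 4)) := by
    intro x₀ hx₀
    have hs : Tendsto (fun p : ℝ × ℝ => p.2) (𝓝[>] At ×ˢ 𝓝 x₀) (𝓝 x₀) := tendsto_snd
    have h6 := P6 x₀ hx₀ ξ₂ (fun A e a b c => ⟨(hξ₂ A e a b c).1, (hξ₂ A e a b c).2.1⟩)
    have h2 := L2.comp (tendsto_fst (f := 𝓝[>] At) (g := 𝓝 x₀))
    have h4 := L4.comp (tendsto_fst (f := 𝓝[>] At) (g := 𝓝 x₀))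
    have h := (h2.add ((h4.div_const 2).mul (hs.pow 2))).add
      ((h6.div_const 24).mul (hs.pow 4))
    have e : 2 * deriv E₂ At + 0 / 2 * x₀ ^ 2 + 720 * E₆ At / 24 * x₀ ^ 4 =
      2 * deriv E₂ At + 30 * E₆ At * x₀ ^ 4 := by ring
    rw [e] at h
    refine h.congr' ?_
    filter_upwards [PE x₀ hx₀] with p hp
    rw [(hξ₂ _ _ hp.2.1 hp.2.2.2.1 hp.2.2.2.2).2.2]
    have := (tpos _ hp.1).ne'
    simp only [Function.comp]
    field_simp
  -- the limit point
  have hq : 0 < -(deriv E₂ At) / (3 * E₆ At) := div_pos (by linarith) (by linarith)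
  obtain ⟨x0, hx0⟩ : ∃ x0 : ℝ, x0 = (-(deriv E₂ At) / (3 * E₆ At)) ^ ((1 : ℝ) / 4) := ⟨_, rfl⟩
  have hx0pos : 0 < x0 := by rw [hx0]; exact Real.rpow_pos_of_pos hq _
  have hx04 : 3 * E₆ At * x0 ^ 4 = -(deriv E₂ At) := by
    rw [hx0, tp_t_pow _ hq.le]; field_simp
  rw [← hx0]
  have hev : ∀ᶠ p : ℝ × ℝ in 𝓝[>] At ×ˢ 𝓝 x0,
      0 < D 2 p.1 (t p.1 * p.2) ∧ At < p.1 ∧ |p.1 - At| < r ∧ 0 < p.2 ∧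
        0 < t p.1 * p.2 ∧ t p.1 * p.2 < r := by
    have hl : 0 < 2 * deriv E₂ At + 30 * E₆ At * x0 ^ 4 := by nlinarith
    filter_upwards [(Q2 x0 hx0pos).eventually (lt_mem_nhds hl), PE x0 hx0pos] with p h1 h2
    refine ⟨?_, h2⟩
    have h3 := pow_pos (tpos _ h2.1) 4
    exact (div_pos_iff_of_pos_right h3).1 h1
  obtain ⟨pa, hpa, pb, hpb, hpp⟩ := Filter.eventually_prod_iff.1 hev
  obtain ⟨b, hb, hb'⟩ := (mem_nhdsGT_iff_exists_Ioo_subset).1 hpa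
  have hab : At < b := hb
  obtain ⟨η₀, hη₀, hball2⟩ := Metric.mem_nhds_iff.1 hpb
  have hall : ∀ A ∈ Set.Ioo At (At + (b - At)), ∀ x ∈ Set.Icc (x0 - η₀ / 2) (x0 + η₀ / 2),
      0 < D 2 A (t A * x) ∧ At < A ∧ |A - At| < r ∧ 0 < x ∧ 0 < t A * x ∧ t A * x < r := by
    intro A hA x hx
    refine hpp (hb' ⟨hA.1, by linarith [hA.2]⟩) (hball2 ?_)
    rw [Metric.mem_ball, Real.dist_eq, abs_lt]
    constructor <;> linarith [hx.1, hx.2]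
  have hsgn : ∀ x, 0 < x → 2 * deriv E₂ At * x + 6 * E₆ At * x ^ 5 =
      6 * E₆ At * x * (x ^ 4 - x0 ^ 4) := by
    intro x hx
    linear_combination (2 * x) * hx04
  have hpt : ∀ x, 0 < x → Tendsto (fun A => D 1 A (t A * x) / t A ^ 5) (𝓝[>] At)
      (𝓝 (6 * E₆ At * x * (x ^ 4 - x0 ^ 4))) := by
    intro x hx
    rw [← hsgn x hx]
    exact (Q1 x hx).comp (tendsto_id.prodMk tendsto_const_nhds)
  have hd1 : ∀ A x, |A - At| < r → 0 < t A * x → t A * x < r →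
      HasDerivAt (fun x => D 1 A (t A * x)) (D 2 A (t A * x) * t A) x := by
    intro A x h1 h2 h3
    have h4 : DifferentiableAt ℝ (D 1 A) (t A * x) :=
      (hcA 1 7 rfl A _ h1 (by rwa [abs_of_pos h2])).differentiableAt (by norm_num)
    have h5 := h4.hasDerivAt
    have h6 : deriv (D 1 A) = D 2 A := by rw [← hDk 1, ← hDk 2, ← iteratedDeriv_succ]
    rw [h6] at h5
    have h7 : HasDerivAt (fun x => t A * x) (t A) x := by
      simpa using (hasDerivAt_id x).const_mul (t A)
    exact h5.comp x h7
  have hxpos : ∀ x ∈ Set.Icc (x0 - η₀ / 2) (x0 + η₀ / 2), 0 < x := by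
    intro x hx
    exact (hall ((At + b) / 2) ⟨by linarith, by linarith⟩ x hx).2.2.2.1
  have hcx : ∀ A ∈ Set.Ioo At (At + (b - At)),
      ContinuousOn (fun x => D 1 A (t A * x)) (Set.Icc (x0 - η₀ / 2) (x0 + η₀ / 2)) := by
    intro A hA x hx
    obtain ⟨-, -, h1, -, h2, h3⟩ := hall A hA x hx
    exact (hd1 A x h1 h2 h3).continuousAt.continuousWithinAt
  obtain ⟨δ, hδ, hδb, X, hXc, hXz, hXl⟩ := tp_branch At x0 (b - At) (η₀ / 2) (by linarith)
    (by linarith) (fun A x => D 1 A (t A * x))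
    (by
      intro A hA
      refine strictMonoOn_of_deriv_pos (convex_Icc _ _) (hcx A hA) ?_
      intro x hx
      obtain ⟨h0, h00, h1, -, h2, h3⟩ := hall A hA x (interior_subset hx)
      rw [(hd1 A x h1 h2 h3).deriv]
      exact mul_pos h0 (tpos A h00))
    hcx
    (by
      intro x hx A hA
      obtain ⟨h0, h00, h1, -, h2, h3⟩ := hall A hA x hx
      have hw : ContinuousAt (fun p : ℝ × ℝ => D 1 p.1 p.2) (A, t A * x) :=
        (hc 1 7 rfl).continuousOn.continuousAt (isOpen_interior.mem_nhds
          (hbox A _ h1 (by rwa [abs_of_pos h2])))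
      have hw2 : ContinuousAt (fun A => (A, t A * x)) A :=
        (continuous_id.prodMk (tcont.mul continuous_const)).continuousAt
      exact (ContinuousAt.comp (f := fun A => (A, t A * x)) hw hw2).continuousWithinAt)
    (by
      intro x hx
      have hxp : 0 < x := hxpos x ⟨hx.1, by linarith [hx.2]⟩
      have hl : 6 * E₆ At * x * (x ^ 4 - x0 ^ 4) < 0 :=
        mul_neg_of_pos_of_neg (by positivity)
          (sub_neg.2 (pow_lt_pow_left₀ hx.2 hxp.le (by norm_num)))
      filter_upwards [(hpt x hxp).eventually (gt_mem_nhds hl), self_mem_nhdsWithin] with A h1 h2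
      have h3 := pow_pos (tpos _ h2) 5
      by_contra hcon
      exact absurd h1 (not_lt.2 (div_nonneg (not_lt.1 hcon) h3.le)))
    (by
      intro x hx
      have hxp : 0 < x := by linarith [hx.1]
      have hl : 0 < 6 * E₆ At * x * (x ^ 4 - x0 ^ 4) :=
        mul_pos (by positivity)
          (sub_pos.2 (pow_lt_pow_left₀ hx.1 hx0pos.le (by norm_num)))
      filter_upwards [(hpt x hxp).eventually (lt_mem_nhds hl), self_mem_nhdsWithin] with A h1 h2
      have h3 := pow_pos (tpos _ h2) 5
      exact (div_pos_iff_of_pos_right h3).1 h1)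
  refine ⟨δ, hδ, fun A => t A * X A, tcont.continuousOn.mul hXc, ?_, ?_⟩
  · intro A hA
    obtain ⟨h1, h2⟩ := hXz A hA
    refine ⟨mul_pos (tpos A hA.1) (hxpos _ h1), ?_⟩
    rw [← iteratedDeriv_one, hDk]
    exact h2
  · refine hXl.congr' ?_
    filter_upwards [self_mem_nhdsWithin] with A hA
    rw [htA, mul_div_cancel_left₀ _ (tpos A hA).ne']
end

section
/- (Second and fourth ε-derivatives of the double Yukawa lattice energy.) Let v₁ > v₂ > 0 and κ₁ > κ₂ > 0, let f(r) := v₁·e^{−κ₁ r}/r − v₂·e^{−κ₂ r}/r, and set ρ(s) := (πs)^{−1/2}·( v₁·exp(−κ₁²/(4s)) − v₂·exp(−κ₂²/(4s)) ). Fix A > 0 and define F(ε) := (1/2) Σ_{(j,k)∈ℤ²∖{(0,0)}} f(√(A(j²e^{−ε} + k²e^{ε}))) for ε ∈ ℝ (i.e., F(ε) = E(A, e^{ε})). Then F is smooth and even, and d²F/dε²(0) = ∫₀^∞ H(As)·ρ(s) ds, where H(t) := t·Θ(t)·Θ'(t) + t²·Θ(t)·Θ''(t) − t²·(Θ'(t))²;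 moreover d⁴F/dε⁴(0) = ∫₀^∞ K(As)·ρ(s) ds, where K(t) := t·Θ(t)Θ'(t) − t²·(Θ'(t))² + 7t²·Θ(t)Θ''(t) + 6t³·Θ(t)Θ'''(t) − 6t³·Θ'(t)Θ''(t) + t⁴·Θ(t)Θ''''(t) − 4t⁴·Θ'(t)Θ'''(t) + 3t⁴·(Θ''(t))². -/
open MeasureTheory

/-- `K(t) := t·Θ·Θ' − t²(Θ')² + 7t²·Θ·Θ'' + 6t³·Θ·Θ''' − 6t³·Θ'·Θ'' + t⁴·Θ·Θ''''
− 4t⁴·Θ'·Θ''' + 3t⁴·(Θ'')²`, all derivatives evaluated at `t`. -/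
noncomputable def Kfun (t : ℝ) : ℝ :=
  t * Θ t * deriv Θ t - t ^ 2 * (deriv Θ t) ^ 2 +
    7 * t ^ 2 * Θ t * iteratedDeriv 2 Θ t +
    6 * t ^ 3 * Θ t * iteratedDeriv 3 Θ t -
    6 * t ^ 3 * deriv Θ t * iteratedDeriv 2 Θ t +
    t ^ 4 * Θ t * iteratedDeriv 4 Θ t -
    4 * t ^ 4 * deriv Θ t * iteratedDeriv 3 Θ t +
    3 * t ^ 4 * (iteratedDeriv 2 Θ t) ^ 2

open Filter Topology
set_option linter.unusedVariables false

lemma dy_param_step {μ : Measure ℝ} (φ : ℝ → ℂ → ℂ) (g : ℝ → ℝ) (z0 : ℂ) (r : ℝ) (hr : 0 < r)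
    (hm : ∀ z ∈ Metric.ball z0 r, AEStronglyMeasurable (fun s => φ s z) μ)
    (hd : ∀ᵐ s ∂μ, DifferentiableOn ℂ (φ s) (Metric.ball z0 r))
    (hb : ∀ᵐ s ∂μ, ∀ z ∈ Metric.ball z0 r, ‖φ s z‖ ≤ g s) (hg : Integrable g μ) :
    (∀ z ∈ Metric.ball z0 (r/2), AEStronglyMeasurable (fun s => deriv (φ s) z) μ) ∧
    (∀ᵐ s ∂μ, DifferentiableOn ℂ (deriv (φ s)) (Metric.ball z0 (r/2))) ∧
    (∀ᵐ s ∂μ, ∀ z ∈ Metric.ball z0 (r/2), ‖deriv (φ s) z‖ ≤ g s / (r/2)) ∧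
    (∀ z ∈ Metric.ball z0 (r/2),
      HasDerivAt (fun z => ∫ s, φ s z ∂μ) (∫ s, deriv (φ s) z ∂μ) z) := by
  have hsub : Metric.ball z0 (r/2) ⊆ Metric.ball z0 r := Metric.ball_subset_ball (by linarith)
  have hsub2 : ∀ z ∈ Metric.ball z0 (r/2), Metric.closedBall z (r/2) ⊆ Metric.ball z0 r := by
    intro z hz
    apply Metric.closedBall_subset_ball'
    rw [Metric.mem_ball] at hz; linarith
  have h1 : ∀ z ∈ Metric.ball z0 (r/2), AEStronglyMeasurable (fun s => deriv (φ s) z) μ := by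
    intro z hz
    have hseq : Tendsto (fun n : ℕ => z + (((r/2) / ((n:ℝ)+1) : ℝ) : ℂ)) atTop (𝓝[≠] z) := by
      rw [tendsto_nhdsWithin_iff]
      constructor
      · have h : Tendsto (fun n : ℕ => (r/2) / ((n:ℝ)+1)) atTop (𝓝 0) := by
          have := (tendsto_one_div_add_atTop_nhds_zero_nat (𝕜 := ℝ)).const_mul (r/2)
          simpa [div_eq_mul_inv] using this
        have := (Complex.continuous_ofReal.tendsto 0).comp h
        simpa using this.const_add z
      · refine Eventually.of_forall fun n => ?_
        have : (r/2) / ((n:ℝ)+1) ≠ 0 := by positivity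
        simp only [Set.mem_compl_iff, Set.mem_singleton_iff, add_eq_left]
        exact_mod_cast this
    refine aestronglyMeasurable_of_tendsto_ae (u := atTop)
      (f := fun (n : ℕ) s => slope (φ s) z (z + (((r/2) / ((n:ℝ)+1) : ℝ) : ℂ))) ?_ ?_
    · intro n
      simp only [slope_def_field]
      have hin : z + (((r/2) / ((n:ℝ)+1) : ℝ) : ℂ) ∈ Metric.ball z0 r := by
        apply hsub2 z hz
        rw [Metric.mem_closedBall, dist_eq_norm, add_sub_cancel_left, Complex.norm_real,
          Real.norm_of_nonneg (by positivity)]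
        apply div_le_self (by positivity)
        have : (0:ℝ) ≤ n := by positivity
        linarith
      simp only [div_eq_mul_inv]
      exact ((hm _ hin).sub (hm _ (hsub hz))).mul_const _
    · filter_upwards [hd] with s hs
      have hda : HasDerivAt (φ s) (deriv (φ s) z) z :=
        (hs.differentiableAt (Metric.isOpen_ball.mem_nhds (hsub hz))).hasDerivAt
      exact hda.tendsto_slope.comp hseq
  have h3 : (∀ᵐ s ∂μ, ∀ z ∈ Metric.ball z0 (r/2), ‖deriv (φ s) z‖ ≤ g s / (r/2)) := by
    filter_upwards [hd, hb] with s hs hbs z hz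
    apply Complex.norm_deriv_le_of_forall_mem_sphere_norm_le (by positivity)
    · exact (hs.mono (hsub2 z hz)).diffContOnCl_ball subset_rfl
    · intro w hw
      exact hbs w (hsub2 z hz (Metric.sphere_subset_closedBall hw))
  refine ⟨h1, ?_, h3, ?_⟩
  · filter_upwards [hd] with s hs
    exact (hs.deriv Metric.isOpen_ball).mono hsub
  · intro z hz
    refine (hasDerivAt_integral_of_dominated_loc_of_deriv_le
      (F := fun z s => φ s z) (F' := fun z s => deriv (φ s) z)
      (Metric.isOpen_ball.mem_nhds hz) ?_ ?_ (h1 z hz) h3 (hg.div_const _) ?_).2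
    · filter_upwards [Metric.isOpen_ball.mem_nhds (hsub hz)] with w hw using hm w hw
    · refine hg.mono' (hm z (hsub hz)) ?_
      filter_upwards [hb] with s hs using hs z (hsub hz)
    · filter_upwards [hd] with s hs w hw
      exact (hs.differentiableAt (Metric.isOpen_ball.mem_nhds (hsub hw))).hasDerivAt

lemma dy_param {μ : Measure ℝ} (n : ℕ) : ∀ (φ : ℝ → ℂ → ℂ) (g : ℝ → ℝ) (z0 : ℂ) (r : ℝ) (hr : 0 < r)
    (hm : ∀ z ∈ Metric.ball z0 r, AEStronglyMeasurable (fun s => φ s z) μ)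
    (hd : ∀ᵐ s ∂μ, DifferentiableOn ℂ (φ s) (Metric.ball z0 r))
    (hb : ∀ᵐ s ∂μ, ∀ z ∈ Metric.ball z0 r, ‖φ s z‖ ≤ g s) (hg : Integrable g μ),
    iteratedDeriv n (fun z => ∫ s, φ s z ∂μ) z0 = ∫ s, iteratedDeriv n (φ s) z0 ∂μ := by
  induction n with
  | zero => intros; simp
  | succ n ih =>
    intro φ g z0 r hr hm hd hb hg
    obtain ⟨h1, h2, h3, h4⟩ := dy_param_step φ g z0 r hr hm hd hb hg
    simp only [iteratedDeriv_succ']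
    rw [← ih _ _ z0 (r/2) (by positivity) h1 h2 h3 (hg.div_const _)]
    apply Filter.EventuallyEq.iteratedDeriv_eq
    filter_upwards [Metric.ball_mem_nhds z0 (half_pos hr)] with z hz
    exact (h4 z hz).deriv

lemma dy_ofReal_iter (n : ℕ) : ∀ (G : ℂ → ℂ) (F : ℝ → ℝ) (U : Set ℂ) (_ : IsOpen U)
    (_ : DifferentiableOn ℂ G U) (_ : ∀ x : ℝ, (x:ℂ) ∈ U → G x = F x),
    ∀ x : ℝ, (x:ℂ) ∈ U → iteratedDeriv n G x = (iteratedDeriv n F x : ℝ) := by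
  induction n with
  | zero => intro G F U hU hG h x hx; simpa using h x hx
  | succ n ih =>
    intro G F U hU hG h x hx
    simp only [iteratedDeriv_succ']
    refine ih (deriv G) (deriv F) U hU (hG.deriv hU) ?_ x hx
    intro y hy
    have h1 : HasDerivAt G (deriv G y) y := (hG.differentiableAt (hU.mem_nhds hy)).hasDerivAt
    have hev : ∀ᶠ w : ℝ in 𝓝 y, (w : ℂ) ∈ U :=
      Complex.continuous_ofReal.continuousAt.eventually (hU.mem_nhds hy)
    have h2 : HasDerivAt F (deriv G y).re y := by
      refine h1.real_of_complex.congr_of_eventuallyEq ?_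
      filter_upwards [hev] with w hw
      rw [h w hw, Complex.ofReal_re]
    have h3 := h2.ofReal_comp
    have h4 := h1.comp_ofReal
    rw [h2.deriv]
    refine h4.unique (h3.congr_of_eventuallyEq ?_)
    filter_upwards [hev] with w hw using h w hw

lemma dy_contDiff (G : ℂ → ℂ) (F : ℝ → ℝ) (U : Set ℂ) (hU : IsOpen U)
    (hG : DifferentiableOn ℂ G U) (x : ℝ) (hx : (x:ℂ) ∈ U)
    (h : ∀ x : ℝ, (x:ℂ) ∈ U → G x = F x) {n : WithTop ℕ∞} : ContDiffAt ℝ n F x := by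
  have h1 : ContDiffAt ℂ n G x := (hG.analyticAt (hU.mem_nhds hx)).contDiffAt
  have h2 := h1.real_of_complex
  refine h2.congr_of_eventuallyEq ?_
  have hev : ∀ᶠ w : ℝ in 𝓝 x, (w : ℂ) ∈ U :=
      Complex.continuous_ofReal.continuousAt.eventually (hU.mem_nhds hx)
  filter_upwards [hev] with w hw
  rw [h w hw, Complex.ofReal_re]

/-- weight -/
noncomputable def dyW (κ s : ℝ) : ℝ := (Real.pi * s) ^ (-(1 : ℝ) / 2) * Real.exp (-κ ^ 2 / (4 * s))

noncomputable def dyErf (x : ℝ) : ℝ := ∫ t in (0:ℝ)..x, Real.exp (-t^2)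

lemma dyErf_deriv (x : ℝ) : HasDerivAt dyErf (Real.exp (-x^2)) x := by
  have hc : Continuous (fun t : ℝ => Real.exp (-t^2)) := by fun_prop
  exact intervalIntegral.integral_hasDerivAt_right (hc.intervalIntegrable _ _)
    (hc.stronglyMeasurableAtFilter _ _) hc.continuousAt

lemma dyErf_top : Tendsto dyErf atTop (𝓝 (√Real.pi / 2)) := by
  have h := integral_gaussian_Ioi 1
  have hi : IntegrableOn (fun t : ℝ => Real.exp (-t^2)) (Set.Ioi 0) := by
    have := (integrable_exp_neg_mul_sq (b := 1) one_pos).integrableOn (s := Set.Ioi 0)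
    simpa using this
  have := intervalIntegral_tendsto_integral_Ioi 0 hi tendsto_id
  simp only [neg_mul, one_mul, div_one] at h
  rw [h] at this
  exact this

lemma dyErf_neg (x : ℝ) : dyErf (-x) = - dyErf x := by
  unfold dyErf
  have := intervalIntegral.integral_comp_neg (a := 0) (b := x) (fun t : ℝ => Real.exp (-t^2))
  simp only [neg_sq, neg_zero] at this
  rw [this, intervalIntegral.integral_symm]

lemma dyErf_bot : Tendsto dyErf atBot (𝓝 (-(√Real.pi / 2))) := by
  have h := (dyErf_top.comp tendsto_neg_atBot_atTop).neg
  refine h.congr fun x => ?_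
  simp [dyErf_neg]

/-- antiderivative -/
noncomputable def dyAnti (κ r s : ℝ) : ℝ :=
  Real.exp (κ * r) * dyErf (r * √s + (κ / 2) / √s) + Real.exp (-(κ * r)) * dyErf (r * √s - (κ/2) / √s)

lemma dyAnti_deriv (κ r s : ℝ) (hr : 0 < r) (hs : 0 < s) :
    HasDerivAt (dyAnti κ r) (√Real.pi * r * (Real.exp (-(s * r^2)) * dyW κ s)) s := by
  have hu : 0 < √s := Real.sqrt_pos.2 hs
  have hsq : √s ^ 2 = s := Real.sq_sqrt hs.le
  have h0 : HasDerivAt (fun s => √s) (1 / (2 * √s)) s := Real.hasDerivAt_sqrt hs.ne'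
  have h1 : HasDerivAt (fun s => r * √s) (r * (1 / (2 * √s))) s := h0.const_mul r
  have h2 : HasDerivAt (fun s => (κ/2) / √s) (-(κ/2) * (1 / (2 * √s)) / (√s)^2) s := by
    refine ((hasDerivAt_const s (κ/2)).div h0 hu.ne').congr_deriv ?_
    ring
  have h3 := ((dyErf_deriv _).comp s (h1.add h2)).const_mul (Real.exp (κ * r))
  have h4 := ((dyErf_deriv _).comp s (h1.sub h2)).const_mul (Real.exp (-(κ * r)))
  refine (h3.add h4).congr_deriv ?_
  have e1 : Real.exp (κ * r) * Real.exp (-(r * √s + κ / 2 / √s) ^ 2)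
      = Real.exp (-(s * r^2)) * Real.exp (-κ ^ 2 / (4 * s)) := by
    rw [← Real.exp_add, ← Real.exp_add]
    congr 1
    rw [← hsq, Real.sqrt_sq hu.le]
    field_simp
    ring
  have e2 : Real.exp (-(κ * r)) * Real.exp (-(r * √s - κ / 2 / √s) ^ 2)
      = Real.exp (-(s * r^2)) * Real.exp (-κ ^ 2 / (4 * s)) := by
    rw [← Real.exp_add, ← Real.exp_add]
    congr 1
    rw [← hsq, Real.sqrt_sq hu.le]
    field_simp
    ring
  have e3 : (Real.pi * s) ^ (-(1:ℝ)/2) = 1 / (√Real.pi * √s) := by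
    rw [← Real.sqrt_mul Real.pi_pos.le, Real.sqrt_eq_rpow, neg_div,
      Real.rpow_neg (by positivity), one_div, one_div]
  simp only [Pi.add_apply, Pi.sub_apply] at *
  rw [← mul_assoc, e1, ← mul_assoc, e2, dyW, e3]
  have hp : 0 < √Real.pi := Real.sqrt_pos.2 Real.pi_pos
  field_simp
  ring

lemma dyAnti_top (κ r : ℝ) (hr : 0 < r) : Tendsto (dyAnti κ r) atTop
    (𝓝 (Real.exp (κ * r) * (√Real.pi / 2) + Real.exp (-(κ * r)) * (√Real.pi / 2))) := by
  have hs : Tendsto (fun s => √s) atTop atTop := Real.tendsto_sqrt_atTop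
  have h1 : Tendsto (fun s => r * √s) atTop atTop := hs.const_mul_atTop hr
  have h2 : Tendsto (fun s => (κ/2) / √s) atTop (𝓝 0) := hs.const_div_atTop _
  refine Tendsto.add ?_ ?_
  · exact (dyErf_top.comp (h1.atTop_add h2)).const_mul _
  · have h3 := h1.atTop_add h2.neg
    simp only [← sub_eq_add_neg] at h3
    exact (dyErf_top.comp h3).const_mul _

lemma dyAnti_zero (κ r : ℝ) (hκ : 0 < κ) : Tendsto (dyAnti κ r) (𝓝[>] 0)
    (𝓝 (Real.exp (κ * r) * (√Real.pi / 2) + Real.exp (-(κ * r)) * (-(√Real.pi / 2)))) := by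
  have hs0 : Tendsto (fun s => √s) (𝓝[>] 0) (𝓝 0) := by
    have := (Real.continuous_sqrt.tendsto 0).mono_left (nhdsWithin_le_nhds (s := Set.Ioi 0))
    simpa using this
  have hs : Tendsto (fun s => √s) (𝓝[>] 0) (𝓝[>] 0) := by
    rw [tendsto_nhdsWithin_iff]
    refine ⟨hs0, ?_⟩
    filter_upwards [self_mem_nhdsWithin] with s hs using Real.sqrt_pos.2 hs
  have h1 : Tendsto (fun s => r * √s) (𝓝[>] 0) (𝓝 0) := by simpa using hs0.const_mul r
  have h2 : Tendsto (fun s => (κ/2) / √s) (𝓝[>] 0) atTop := by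
    simp only [div_eq_mul_inv]
    exact (tendsto_inv_nhdsGT_zero.comp hs).const_mul_atTop (by positivity)
  refine Tendsto.add ?_ ?_
  · exact (dyErf_top.comp (h1.add_atTop h2)).const_mul _
  · have h3 := h1.add_atBot (tendsto_neg_atTop_atBot.comp h2)
    have h4 : Tendsto (fun s => r * √s - (κ/2)/√s) (𝓝[>] 0) atBot := by
      simpa [sub_eq_add_neg] using h3
    exact (dyErf_bot.comp h4).const_mul _

lemma dyW_nonneg (κ s : ℝ) (hs : 0 < s) : 0 ≤ dyW κ s := by
  unfold dyW; have := Real.pi_pos; positivity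

lemma dy_laplace (κ r : ℝ) (hκ : 0 < κ) (hr : 0 < r) :
    ∫ s in Set.Ioi (0:ℝ), Real.exp (-(s * r^2)) * dyW κ s = Real.exp (-κ * r) / r := by
  have hp : 0 < √Real.pi := Real.sqrt_pos.2 Real.pi_pos
  set L := Real.exp (κ * r) * (√Real.pi / 2) + Real.exp (-(κ * r)) * (-(√Real.pi / 2)) with hL
  have hcont : ContinuousWithinAt (Function.update (dyAnti κ r) 0 L) (Set.Ici 0) 0 := by
    rw [continuousWithinAt_update_same]
    rw [Set.Ici_sdiff_left]
    exact dyAnti_zero κ r hκ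
  have hder : ∀ s ∈ Set.Ioi (0:ℝ), HasDerivAt (Function.update (dyAnti κ r) 0 L)
      (√Real.pi * r * (Real.exp (-(s * r^2)) * dyW κ s)) s := by
    intro s hs
    refine (dyAnti_deriv κ r s hr hs).congr_of_eventuallyEq ?_
    filter_upwards [isOpen_Ioi.mem_nhds hs] with w hw
    exact Function.update_of_ne (ne_of_gt hw) _ _
  have htop : Tendsto (Function.update (dyAnti κ r) 0 L) atTop
      (𝓝 (Real.exp (κ * r) * (√Real.pi / 2) + Real.exp (-(κ * r)) * (√Real.pi / 2))) := by
    refine (dyAnti_top κ r hr).congr' ?_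
    filter_upwards [eventually_gt_atTop 0] with w hw
    exact (Function.update_of_ne (ne_of_gt hw) _ _).symm
  have key := integral_Ioi_of_hasDerivAt_of_nonneg hcont hder (fun s hs => by
    have := dyW_nonneg κ s hs
    positivity) htop
  rw [integral_const_mul, Function.update_self, hL] at key
  rw [eq_div_iff hr.ne', neg_mul]
  have : √Real.pi * ((∫ s in Set.Ioi (0:ℝ), Real.exp (-(s * r^2)) * dyW κ s) * r)
    = √Real.pi * Real.exp (-(κ * r)) := by linear_combination key
  exact mul_left_cancel₀ hp.ne' this

noncomputable def dyTC (z : ℂ) : ℂ := jacobiTheta (Complex.I * z / Real.pi)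

lemma dyTC_im (z : ℂ) : (Complex.I * z / Real.pi).im = z.re / Real.pi := by
  rw [Complex.div_ofReal_im]; simp

lemma dyTC_diff {z : ℂ} (hz : 0 < z.re) : DifferentiableAt ℂ dyTC z := by
  have h : 0 < (Complex.I * z / Real.pi).im := by
    rw [dyTC_im]; exact div_pos hz Real.pi_pos
  have h1 : DifferentiableAt ℂ (fun z : ℂ => Complex.I * z / Real.pi) z := by fun_prop
  exact (differentiableAt_jacobiTheta h).comp z h1

lemma dyTC_bound {z : ℂ} {x : ℝ} (hx : 0 < x) (hz : x ≤ z.re) :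
    ‖dyTC z - 1‖ ≤ 2 * Real.exp (-x/2) / x := by
  have hz0 : 0 < z.re := hx.trans_le hz
  have h : 0 < (Complex.I * z / Real.pi).im := by
    rw [dyTC_im]; exact div_pos hz0 Real.pi_pos
  have h1 := norm_jacobiTheta_sub_one_le h
  have e : -Real.pi * (Complex.I * z / Real.pi).im = - z.re := by
    rw [dyTC_im]; field_simp [Real.pi_pos.ne']
  rw [e] at h1
  refine h1.trans ?_
  have hmono : Real.exp (-z.re) ≤ Real.exp (-x) := Real.exp_le_exp.2 (by linarith)
  have hlt : Real.exp (-x) < 1 := by simpa using hx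
  have h2 : 2 / (1 - Real.exp (-z.re)) * Real.exp (-z.re) ≤ 2 / (1 - Real.exp (-x)) * Real.exp (-x) := by
    have : 0 < 1 - Real.exp (-x) := by linarith
    gcongr
  refine h2.trans ?_
  have h3 : Real.exp (-x) = Real.exp (-x/2) * Real.exp (-x/2) := by
    rw [← Real.exp_add]; congr 1; ring
  have h4 : x * Real.exp (-x/2) ≤ 1 - Real.exp (-x) := by
    have h5 : x / 2 ≤ Real.sinh (x/2) := Real.self_le_sinh_iff.2 (by linarith)
    rw [Real.sinh_eq] at h5
    have h6 : Real.exp (-x/2) * Real.exp (x/2) = 1 := by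
      rw [← Real.exp_add]; simp; ring
    have h7 : Real.exp (-(x/2)) = Real.exp (-x/2) := by congr 1; ring
    rw [h7] at h5
    have h8 := mul_le_mul_of_nonneg_left h5 (Real.exp_pos (-x/2)).le
    rw [h3]
    nlinarith
  have h9 : 0 < 1 - Real.exp (-x) := by linarith
  rw [div_mul_eq_mul_div, div_le_div_iff₀ h9 hx]
  have := mul_le_mul_of_nonneg_left h4 (Real.exp_pos (-x/2)).le
  rw [h3] at *
  nlinarith

lemma dyT_hasSum' {t : ℝ} (ht : 0 < t) :
    HasSum (fun j : ℤ => ((Real.exp (-t) ^ (j.natAbs ^ 2) : ℝ) : ℂ)) (dyTC t) := by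
  have h : 0 < (Complex.I * (t:ℂ) / Real.pi).im := by
    rw [dyTC_im]; simpa using div_pos ht Real.pi_pos
  have h1 := hasSum_jacobiTheta₂_term 0 h
  rw [← jacobiTheta_eq_jacobiTheta₂] at h1
  refine h1.congr_fun ?_ 
  intro j
  have hp : (Real.pi : ℂ) ≠ 0 := by exact_mod_cast Real.pi_pos.ne'
  rw [jacobiTheta₂_term, ← Real.exp_nat_mul, Complex.ofReal_exp]
  congr 1
  have : ((j.natAbs ^ 2 : ℕ) : ℂ) = (j:ℂ)^2 := by
    rw [← Int.cast_natCast]; push_cast; norm_cast; simp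
  rw [Complex.ofReal_mul, Complex.ofReal_natCast, this]
  push_cast
  field_simp
  linear_combination (-(j:ℂ)^2 * t) * Complex.I_sq

lemma dyT_hasSum {t : ℝ} (ht : 0 < t) :
    HasSum (fun j : ℤ => Real.exp (-t * (j:ℝ)^2)) (Θ t) := by
  have h : Summable (fun j : ℤ => Real.exp (-t) ^ (j.natAbs ^ 2)) :=
    Complex.summable_ofReal.1 (dyT_hasSum' ht).summable
  have h2 := h.hasSum
  refine h2.congr_fun fun j => ?_
  rw [← Real.exp_nat_mul]
  congr 1
  have : ((j.natAbs ^ 2 : ℕ) : ℝ) = (j:ℝ)^2 := by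
    rw [← Int.cast_natCast]; push_cast; norm_cast; simp
  rw [this]; ring

lemma dyTC_ofReal {t : ℝ} (ht : 0 < t) : dyTC t = (Θ t : ℝ) := by
  rw [← (dyT_hasSum' ht).tsum_eq, ← Complex.ofReal_tsum]; rfl

lemma dyT_contDiffAt {t : ℝ} (ht : 0 < t) {n : WithTop ℕ∞} : ContDiffAt ℝ n Θ t := by
  refine dy_contDiff dyTC Θ {z | 0 < z.re} (isOpen_lt continuous_const Complex.continuous_re)
    (fun z hz => (dyTC_diff hz).differentiableWithinAt) t (by simpa using ht) ?_
  intro x hx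
  exact dyTC_ofReal (by simpa using hx)

lemma dyT_iter {t : ℝ} (ht : 0 < t) (n : ℕ) :
    HasDerivAt (iteratedDeriv n Θ) (iteratedDeriv (n+1) Θ t) t := by
  rw [iteratedDeriv_succ]
  apply DifferentiableAt.hasDerivAt
  have h : AnalyticAt ℝ Θ t := (dyT_contDiffAt ht (n := ⊤)).analyticAt
  rw [iteratedDeriv_eq_iterate]; exact (h.iterated_deriv n).differentiableAt

/-- g -/
noncomputable def dyg (t : ℝ) : ℕ → ℝ → ℝ
  | 0, x => iteratedDeriv 0 Θ (t * Real.exp x)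
  | 1, x => (t * Real.exp x) * iteratedDeriv 1 Θ (t * Real.exp x)
  | 2, x => (t * Real.exp x) * iteratedDeriv 1 Θ (t * Real.exp x)
      + (t * Real.exp x)^2 * iteratedDeriv 2 Θ (t * Real.exp x)
  | 3, x => (t * Real.exp x) * iteratedDeriv 1 Θ (t * Real.exp x)
      + 3 * (t * Real.exp x)^2 * iteratedDeriv 2 Θ (t * Real.exp x)
      + (t * Real.exp x)^3 * iteratedDeriv 3 Θ (t * Real.exp x)
  | _, x => (t * Real.exp x) * iteratedDeriv 1 Θ (t * Real.exp x)
      + 7 * (t * Real.exp x)^2 * iteratedDeriv 2 Θ (t * Real.exp x)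
      + 6 * (t * Real.exp x)^3 * iteratedDeriv 3 Θ (t * Real.exp x)
      + (t * Real.exp x)^4 * iteratedDeriv 4 Θ (t * Real.exp x)

lemma dyg_deriv {t : ℝ} (ht : 0 < t) (k : ℕ) (hk : k < 4) (x : ℝ) :
    HasDerivAt (dyg t k) (dyg t (k+1) x) x := by
  have hu : HasDerivAt (fun x => t * Real.exp x) (t * Real.exp x) x :=
    (Real.hasDerivAt_exp x).const_mul t
  have hpos : 0 < t * Real.exp x := by positivity
  have hD : ∀ n, HasDerivAt (fun x => iteratedDeriv n Θ (t * Real.exp x))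
      (iteratedDeriv (n+1) Θ (t * Real.exp x) * (t * Real.exp x)) x := fun n =>
    HasDerivAt.comp (h₂ := iteratedDeriv n Θ) x (dyT_iter hpos n) hu
  interval_cases k
  · refine (hD 0).congr_deriv ?_
    simp only [dyg]; ring
  · refine (hu.mul (hD 1)).congr_deriv ?_
    simp only [dyg]; ring
  · refine ((hu.mul (hD 1)).add ((hu.pow 2).mul (hD 2))).congr_deriv ?_
    simp only [dyg, Pi.pow_apply]; push_cast; ring
  · refine (((hu.mul (hD 1)).add (((hu.pow 2).const_mul 3).mul (hD 2))).add
      ((hu.pow 3).mul (hD 3))).congr_deriv ?_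
    simp only [dyg, Pi.pow_apply]; push_cast; ring

lemma dyq_derivs {t : ℝ} (ht : 0 < t) (c : ℝ) :
    iteratedDeriv 2 (fun ε : ℝ => c * (Θ (t * Real.exp (-ε)) * Θ (t * Real.exp ε) - 1)) 0
      = 2 * c * Hfun t ∧
    iteratedDeriv 4 (fun ε : ℝ => c * (Θ (t * Real.exp (-ε)) * Θ (t * Real.exp ε) - 1)) 0
      = 2 * c * Kfun t := by
  have hp := dyg_deriv ht
  have hn : ∀ k, k < 4 → ∀ x, HasDerivAt (fun x => dyg t k (-x)) (-dyg t (k+1) (-x)) x := by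
    intro k hk x
    have := (hp k hk (-x)).comp x (hasDerivAt_neg x)
    refine this.congr_deriv ?_
    ring
  set g := dyg t with hg
  have d1 : deriv (fun ε : ℝ => c * (Θ (t * Real.exp (-ε)) * Θ (t * Real.exp ε) - 1))
      = fun x => c * (g 0 (-x) * g 1 x - g 1 (-x) * g 0 x) := by
    funext x
    have := (((hn 0 (by norm_num) x).mul (hp 0 (by norm_num) x)).sub_const 1).const_mul c
    have h2 : (fun ε : ℝ => c * (Θ (t * Real.exp (-ε)) * Θ (t * Real.exp ε) - 1)) =
      (fun x => c * (((fun x => g 0 (-x)) * g 0) x - 1)) := by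
      funext x; simp [hg, dyg]
    rw [h2]
    rw [this.deriv]; ring
  have d2 : deriv (fun x => c * (g 0 (-x) * g 1 x - g 1 (-x) * g 0 x))
      = fun x => c * (g 0 (-x) * g 2 x - 2 * (g 1 (-x) * g 1 x) + g 2 (-x) * g 0 x) := by
    funext x
    have := (((hn 0 (by norm_num) x).mul (hp 1 (by norm_num) x)).sub
      ((hn 1 (by norm_num) x).mul (hp 0 (by norm_num) x))).const_mul c
    refine (this.congr_deriv ?_).deriv
    ring
  have d3 : deriv (fun x => c * (g 0 (-x) * g 2 x - 2 * (g 1 (-x) * g 1 x) + g 2 (-x) * g 0 x))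
      = fun x => c * (g 0 (-x) * g 3 x - 3 * (g 1 (-x) * g 2 x) + 3 * (g 2 (-x) * g 1 x)
          - g 3 (-x) * g 0 x) := by
    funext x
    have := ((((hn 0 (by norm_num) x).mul (hp 2 (by norm_num) x)).sub
      (((hn 1 (by norm_num) x).mul (hp 1 (by norm_num) x)).const_mul 2)).add
      ((hn 2 (by norm_num) x).mul (hp 0 (by norm_num) x))).const_mul c
    refine (this.congr_deriv ?_).deriv
    ring
  have d4 : deriv (fun x => c * (g 0 (-x) * g 3 x - 3 * (g 1 (-x) * g 2 x) + 3 * (g 2 (-x) * g 1 x)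
          - g 3 (-x) * g 0 x))
      = fun x => c * (g 0 (-x) * g 4 x - 4 * (g 1 (-x) * g 3 x) + 6 * (g 2 (-x) * g 2 x)
          - 4 * (g 3 (-x) * g 1 x) + g 4 (-x) * g 0 x) := by
    funext x
    have := (((((hn 0 (by norm_num) x).mul (hp 3 (by norm_num) x)).sub
      (((hn 1 (by norm_num) x).mul (hp 2 (by norm_num) x)).const_mul 3)).add
      (((hn 2 (by norm_num) x).mul (hp 1 (by norm_num) x)).const_mul 3)).sub
      ((hn 3 (by norm_num) x).mul (hp 0 (by norm_num) x))).const_mul c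
    refine (this.congr_deriv ?_).deriv
    ring
  constructor
  · rw [iteratedDeriv_succ', iteratedDeriv_succ', iteratedDeriv_zero, d1, d2]
    simp only [hg, dyg, Hfun, neg_zero, Real.exp_zero, mul_one, iteratedDeriv_zero,
      iteratedDeriv_one]
    ring
  · rw [iteratedDeriv_succ', iteratedDeriv_succ', iteratedDeriv_succ', iteratedDeriv_succ',
      iteratedDeriv_zero, d1, d2, d3, d4]
    simp only [hg, dyg, Kfun, neg_zero, Real.exp_zero, mul_one, iteratedDeriv_zero,
      iteratedDeriv_one]
    ring

lemma dyW_meas (κ : ℝ) : Measurable (dyW κ) := by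
  unfold dyW; fun_prop

/-- dominating factor -/
noncomputable def dyB (c s : ℝ) : ℝ :=
  (2 * Real.exp (-(c*s)/2) / (c*s)) * (2 * Real.exp (-(c*s)/2) / (c*s)) + 2 * (2 * Real.exp (-(c*s)/2) / (c*s))

lemma dyB_nonneg {c s : ℝ} (hc : 0 < c) (hs : 0 < s) : 0 ≤ dyB c s := by
  unfold dyB; positivity

lemma dyB_int (κ c : ℝ) (hκ : 0 < κ) (hc : 0 < c) :
    IntegrableOn (fun s => dyB c s * dyW κ s) (Set.Ioi 0) := by
  have i1 := integrableOn_rpow_mul_exp_neg_mul_rpow (p := 1) (s := -(1:ℝ)/2) (b := c/2)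
    (by norm_num) one_pos (by positivity)
  have i2 := integrableOn_rpow_mul_exp_neg_mul_rpow (p := 1) (s := (1:ℝ)/2) (b := c/2)
    (by norm_num) one_pos (by positivity)
  set P := Real.pi ^ (-(1:ℝ)/2) with hP
  have hPpos : 0 < P := Real.rpow_pos_of_pos Real.pi_pos _
  have i3 := (i1.const_mul (P * (128 / (κ^4 * c^2)))).add (i2.const_mul (P * (128 / (κ^4 * c))))
  refine Integrable.mono' i3 ?_ ?_
  · apply Measurable.aestronglyMeasurable
    have := dyW_meas κ
    unfold dyB; fun_prop
  · filter_upwards [ae_restrict_mem measurableSet_Ioi] with s hs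
    have hs : 0 < s := hs
    rw [Real.norm_of_nonneg (mul_nonneg (dyB_nonneg hc hs) (dyW_nonneg κ s hs))]
    simp only [Pi.add_apply, Real.rpow_one]
    have e1 : (Real.pi * s) ^ (-(1:ℝ)/2) = P * s ^ (-(1:ℝ)/2) :=
      Real.mul_rpow Real.pi_pos.le hs.le
    have e2 : s ^ ((1:ℝ)/2) = s * s ^ (-(1:ℝ)/2) := by
      rw [← Real.rpow_one_add' hs.le (by norm_num)]; norm_num
    have e3 : Real.exp (-κ^2/(4*s)) ≤ 32 * s^2 / κ^4 := by
      have hy : 0 < κ^2/(4*s) := by positivity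
      have := Real.quadratic_le_exp_of_nonneg hy.le
      have h2 : (κ^2/(4*s))^2/2 ≤ Real.exp (κ^2/(4*s)) := by linarith
      rw [neg_div, Real.exp_neg]
      calc (Real.exp (κ^2/(4*s)))⁻¹ ≤ ((κ^2/(4*s))^2/2)⁻¹ := by gcongr
        _ = _ := by field_simp; norm_num
    have e4 : Real.exp (-(c*s)/2) ≤ 1 := by
      rw [Real.exp_le_one_iff]
      have : 0 < c * s := by positivity
      linarith
    have e5 : Real.exp (-(c/2) * s) = Real.exp (-(c*s)/2) := by congr 1; ring
    rw [dyW, e1, e2, e5]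
    set E := Real.exp (-(c*s)/2)
    have hE : 0 < E := Real.exp_pos _
    set Q := s ^ (-(1:ℝ)/2)
    have hQ : 0 < Q := Real.rpow_pos_of_pos hs _
    have e6 : dyB c s ≤ 4 * E / (c*s)^2 + 4 * E / (c * s) := by
      have : dyB c s = 4 * (E * E) / (c*s)^2 + 4 * E / (c * s) := by
        have h0 : dyB c s = (2*E/(c*s))*(2*E/(c*s)) + 2*(2*E/(c*s)) := rfl
        rw [h0]; field_simp; ring
      rw [this]
      have : E * E ≤ E := by nlinarith
      gcongr
    calc dyB c s * (P * Q * Real.exp (-κ^2/(4*s)))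
        ≤ (4 * E / (c*s)^2 + 4 * E / (c * s)) * (P * Q * (32 * s^2 / κ^4)) := by
          gcongr
      _ = _ := by field_simp; ring

lemma dy_re_bound {A R s : ℝ} (hA : 0 < A) (hs : 0 < s) {z : ℂ} (h1 : |z.im| < 1) (h2 : |z.re| < R) :
    (A * Real.exp (-R) * Real.cos 1) * s ≤ (((A * s : ℝ) : ℂ) * Complex.exp z).re := by
  rw [Complex.re_ofReal_mul, Complex.exp_re]
  have hc : Real.cos 1 ≤ Real.cos z.im := by
    rw [← Real.cos_abs z.im]
    exact Real.cos_le_cos_of_nonneg_of_le_pi (abs_nonneg _) (by linarith [Real.pi_gt_three]) h1.le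
  have he : Real.exp (-R) ≤ Real.exp z.re := Real.exp_le_exp.2 (abs_lt.1 h2).1.le
  have := Real.cos_one_pos
  calc _ = A * s * (Real.exp (-R) * Real.cos 1) := by ring
    _ ≤ _ := by gcongr

/-- product -/
noncomputable def dyP (A s : ℝ) (z : ℂ) : ℂ :=
  dyTC (((A * s : ℝ) : ℂ) * Complex.exp (-z)) * dyTC (((A * s : ℝ) : ℂ) * Complex.exp z) - 1

lemma dy_re_pos {A s : ℝ} (hA : 0 < A) (hs : 0 < s) {z : ℂ} (h1 : |z.im| < 1) :
    0 < (((A * s : ℝ) : ℂ) * Complex.exp z).re := by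
  have := Real.cos_one_pos
  exact lt_of_lt_of_le (by positivity) (dy_re_bound hA hs h1 (lt_add_one _))

lemma dyP_bound {A R s : ℝ} (hA : 0 < A) (hs : 0 < s) {z : ℂ} (h1 : |z.im| < 1) (h2 : |z.re| < R) :
    ‖dyP A s z‖ ≤ dyB (A * Real.exp (-R) * Real.cos 1) s := by
  have := Real.cos_one_pos
  have b1 := dyTC_bound (by positivity) (dy_re_bound hA hs h1 h2)
  have b2 := dyTC_bound (by positivity) (dy_re_bound (z := -z) hA hs (by simpa using h1) (by simpa using h2))
  unfold dyP dyB
  set X := dyTC (((A * s : ℝ) : ℂ) * Complex.exp (-z))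
  set Y := dyTC (((A * s : ℝ) : ℂ) * Complex.exp z)
  have e : X * Y - 1 = (X - 1) * (Y - 1) + ((X - 1) + (Y - 1)) := by ring
  rw [e]
  refine (norm_add_le _ _).trans ?_
  rw [norm_mul, two_mul (2 * Real.exp _ / _)]
  refine add_le_add (mul_le_mul b2 b1 (norm_nonneg _) (by positivity)) ?_
  exact (norm_add_le _ _).trans (add_le_add b2 b1)

lemma dyP_diff {A s : ℝ} (hA : 0 < A) (hs : 0 < s) {z : ℂ} (h1 : |z.im| < 1) :
    DifferentiableAt ℂ (dyP A s) z := by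
  unfold dyP
  have d1 := (dyTC_diff (dy_re_pos hA hs h1)).comp z
    (f := fun z => ((A * s : ℝ) : ℂ) * Complex.exp z) (by fun_prop)
  have d2 := (dyTC_diff (dy_re_pos (z := -z) hA hs (by simpa using h1))).comp z
    (f := fun z => ((A * s : ℝ) : ℂ) * Complex.exp (-z)) (by fun_prop)
  exact (d2.mul d1).sub_const 1

lemma dyP_meas {A : ℝ} (hA : 0 < A) {z : ℂ} (h1 : |z.im| < 1) :
    AEStronglyMeasurable (fun s => dyP A s z) (volume.restrict (Set.Ioi 0)) := by
  apply ContinuousOn.aestronglyMeasurable _ measurableSet_Ioi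
  intro s hs
  apply ContinuousAt.continuousWithinAt
  unfold dyP
  have d1 := (dyTC_diff (dy_re_pos hA hs h1)).continuousAt.comp (x := s)
    (f := fun s : ℝ => ((A * s : ℝ) : ℂ) * Complex.exp z) (by fun_prop)
  have d2 := (dyTC_diff (dy_re_pos (z := -z) hA hs (by simpa using h1))).continuousAt.comp (x := s)
    (f := fun s : ℝ => ((A * s : ℝ) : ℂ) * Complex.exp (-z)) (by fun_prop)
  exact (d2.mul d1).sub continuousAt_const

lemma dyP_ofReal {A s : ℝ} (hA : 0 < A) (hs : 0 < s) (ε : ℝ) :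
    dyP A s ε = ((Θ (A * s * Real.exp (-ε)) * Θ (A * s * Real.exp ε) - 1 : ℝ) : ℂ) := by
  unfold dyP
  have h1 := dyTC_ofReal (t := A * s * Real.exp (-ε)) (by positivity)
  have h2 := dyTC_ofReal (t := A * s * Real.exp ε) (by positivity)
  push_cast at h1 h2 ⊢
  rw [h1, h2]

lemma dy_int {A κ : ℝ} (hA : 0 < A) (hκ : 0 < κ) (ε : ℝ) :
    IntegrableOn (fun s => (Θ (A * s * Real.exp (-ε)) * Θ (A * s * Real.exp ε) - 1) * dyW κ s)
      (Set.Ioi 0) := by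
  have hc := Real.cos_one_pos
  refine Integrable.mono' (dyB_int κ (A * Real.exp (-(|ε|+1)) * Real.cos 1) hκ (by positivity)) ?_ ?_
  · refine AEStronglyMeasurable.mul ?_ (dyW_meas κ).aestronglyMeasurable
    have := Complex.continuous_re.comp_aestronglyMeasurable (dyP_meas (z := (ε:ℂ)) hA (by simp))
    refine this.congr ?_
    filter_upwards [ae_restrict_mem measurableSet_Ioi] with s hs
    rw [dyP_ofReal hA hs, Complex.ofReal_re]
  · filter_upwards [ae_restrict_mem measurableSet_Ioi] with s hs
    rw [norm_mul, Real.norm_of_nonneg (dyW_nonneg κ s hs)]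
    have := dyP_bound (R := |ε|+1) (z := (ε:ℂ)) hA hs (by simp) (by simp)
    rw [dyP_ofReal hA hs, Complex.norm_real] at this
    exact mul_le_mul_of_nonneg_right this (dyW_nonneg κ s hs)

lemma dy_hasSum {A κ : ℝ} (hA : 0 < A) (hκ : 0 < κ) (ε : ℝ) :
    HasSum (fun p : {p : ℤ × ℤ // p ≠ 0} =>
      Real.exp (-κ * √(A * ((p.1.1 : ℝ) ^ 2 * Real.exp (-ε) + (p.1.2 : ℝ) ^ 2 * Real.exp ε))) /
        √(A * ((p.1.1 : ℝ) ^ 2 * Real.exp (-ε) + (p.1.2 : ℝ) ^ 2 * Real.exp ε)))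
      (∫ s in Set.Ioi (0:ℝ),
        (Θ (A * s * Real.exp (-ε)) * Θ (A * s * Real.exp ε) - 1) * dyW κ s) := by
  set q : {p : ℤ × ℤ // p ≠ 0} → ℝ := fun p =>
    A * ((p.1.1 : ℝ) ^ 2 * Real.exp (-ε) + (p.1.2 : ℝ) ^ 2 * Real.exp ε) with hq
  have hqpos : ∀ p, 0 < q p := by
    rintro ⟨⟨j, k⟩, hp⟩
    simp only [hq]
    apply mul_pos hA
    by_cases hj : j = 0
    · have hk : k ≠ 0 := by rintro rfl; exact hp (by rw [hj]; rfl)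
      have : (k:ℝ) ≠ 0 := by exact_mod_cast hk
      positivity
    · have : (j:ℝ) ≠ 0 := by exact_mod_cast hj
      positivity
  have hsum : ∀ s, 0 < s → HasSum (fun p : {p : ℤ × ℤ // p ≠ 0} => Real.exp (-(s * q p)))
      (Θ (A * s * Real.exp (-ε)) * Θ (A * s * Real.exp ε) - 1) := by
    intro s hs
    have s1 := dyT_hasSum (t := A * s * Real.exp (-ε)) (by positivity)
    have s2 := dyT_hasSum (t := A * s * Real.exp ε) (by positivity)
    have s3 := s1.mul s2 (s1.summable.mul_of_nonneg s2.summable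
      (fun _ => (Real.exp_pos _).le) (fun _ => (Real.exp_pos _).le))
    have s4 := (hasSum_ite_sub_hasSum s3 (0 : ℤ × ℤ))
    have s5 := (hasSum_subtype_iff_indicator (s := {p : ℤ × ℤ | p ≠ 0})
      (f := fun x : ℤ × ℤ => Real.exp (-(A * s * Real.exp (-ε)) * (x.1:ℝ)^2) *
        Real.exp (-(A * s * Real.exp ε) * (x.2:ℝ)^2))
      (a := Θ (A * s * Real.exp (-ε)) * Θ (A * s * Real.exp ε) - 1)).2 (by
        have e0 : Real.exp (-(A * s * Real.exp (-ε)) * (((0 : ℤ × ℤ).1 : ℤ):ℝ)^2) *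
          Real.exp (-(A * s * Real.exp ε) * (((0 : ℤ × ℤ).2 : ℤ):ℝ)^2) = 1 := by simp
        rw [e0] at s4
        refine s4.congr_fun fun p => ?_
        simp only [Set.indicator, Set.mem_setOf_eq]
        by_cases h : p = 0 <;> simp [h])
    refine s5.congr_fun fun p => ?_
    simp only [Function.comp, hq]
    rw [← Real.exp_add]
    congr 1
    ring
  have key := hasSum_integral_of_dominated_convergence (μ := volume.restrict (Set.Ioi (0:ℝ)))
    (F := fun (p : {p : ℤ × ℤ // p ≠ 0}) s => Real.exp (-(s * q p)) * dyW κ s)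
    (f := fun s => (Θ (A * s * Real.exp (-ε)) * Θ (A * s * Real.exp ε) - 1) * dyW κ s)
    (fun p s => Real.exp (-(s * q p)) * dyW κ s) ?_ ?_ ?_ ?_ ?_
  · refine key.congr_fun fun p => ?_
    have := dy_laplace κ (√(q p)) hκ (Real.sqrt_pos.2 (hqpos p))
    rw [Real.sq_sqrt (hqpos p).le] at this
    exact this.symm
  · intro p
    have := dyW_meas κ
    apply Measurable.aestronglyMeasurable
    fun_prop
  · intro p
    filter_upwards [ae_restrict_mem measurableSet_Ioi] with s hs
    rw [Real.norm_of_nonneg (mul_nonneg (Real.exp_pos _).le (dyW_nonneg κ s hs))]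
  · filter_upwards [ae_restrict_mem measurableSet_Ioi] with s hs
    exact ((hsum s hs).mul_right _).summable
  · refine (dy_int hA hκ ε).congr ?_
    filter_upwards [ae_restrict_mem measurableSet_Ioi] with s hs
    exact ((hsum s hs).mul_right _).tsum_eq.symm
  · filter_upwards [ae_restrict_mem measurableSet_Ioi] with s hs
    exact (hsum s hs).mul_right _
/-- Second and fourth `ε`-derivatives of the double Yukawa lattice energy:
with `f` the double Yukawa potential, `ρ` its inverse Laplace density and
`F(ε) := (1/2)Σ_{(j,k)≠(0,0)} f(√(A(j²e^{−ε} + k²e^{ε}))) = E(A,e^ε)`,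
the function `F` is smooth and even, `F''(0) = ∫₀^∞ H(As)ρ(s) ds` and
`F''''(0) = ∫₀^∞ K(As)ρ(s) ds`. -/
theorem double_yukawa_energy_eps_derivs (v₁ v₂ κ₁ κ₂ : ℝ)
    (hv₂ : 0 < v₂) (hv : v₂ < v₁) (hκ₂ : 0 < κ₂) (hκ : κ₂ < κ₁)
    (A : ℝ) (hA : 0 < A) :
    let f : ℝ → ℝ := fun r => v₁ * Real.exp (-κ₁ * r) / r - v₂ * Real.exp (-κ₂ * r) / r
    let ρ : ℝ → ℝ := fun s =>
      (Real.pi * s) ^ (-(1 : ℝ) / 2) *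
        (v₁ * Real.exp (-κ₁ ^ 2 / (4 * s)) - v₂ * Real.exp (-κ₂ ^ 2 / (4 * s)))
    let F : ℝ → ℝ := fun ε =>
      (1 / 2) * ∑' p : {p : ℤ × ℤ // p ≠ 0},
        f (Real.sqrt (A * ((p.1.1 : ℝ) ^ 2 * Real.exp (-ε) +
          (p.1.2 : ℝ) ^ 2 * Real.exp ε)))
    ContDiff ℝ (⊤ : ℕ∞) F ∧ (∀ ε : ℝ, F (-ε) = F ε) ∧
      iteratedDeriv 2 F 0 = (∫ s in Set.Ioi (0 : ℝ), Hfun (A * s) * ρ s) ∧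
      iteratedDeriv 4 F 0 = ∫ s in Set.Ioi (0 : ℝ), Kfun (A * s) * ρ s := by
  intro f ρ F
  have hv₁ : 0 < v₁ := hv₂.trans hv
  have hκ₁ : 0 < κ₁ := hκ₂.trans hκ
  have hρ : ∀ s, ρ s = v₁ * dyW κ₁ s - v₂ * dyW κ₂ s := by
    intro s; simp only [ρ, dyW]; ring
  have hρm : Measurable ρ := by
    have h1 := dyW_meas κ₁
    have h2 := dyW_meas κ₂
    have : ρ = fun s => v₁ * dyW κ₁ s - v₂ * dyW κ₂ s := funext hρ
    rw [this]; fun_prop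
  have hρb : ∀ s, 0 < s → |ρ s| ≤ v₁ * dyW κ₁ s + v₂ * dyW κ₂ s := by
    intro s hs
    have h1 := mul_nonneg hv₁.le (dyW_nonneg κ₁ s hs)
    have h2 := mul_nonneg hv₂.le (dyW_nonneg κ₂ s hs)
    rw [hρ, abs_le]; constructor <;> linarith
  -- integral formula
  have hF : ∀ ε, F ε = ∫ s in Set.Ioi (0:ℝ),
      (1/2 * ρ s) * (Θ (A * s * Real.exp (-ε)) * Θ (A * s * Real.exp ε) - 1) := by
    intro ε
    have s1 := (dy_hasSum hA hκ₁ ε).mul_left v₁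
    have s2 := (dy_hasSum hA hκ₂ ε).mul_left v₂
    have s3 := (s1.sub s2).mul_left (1/2)
    have i1 := (dy_int hA hκ₁ ε).const_mul v₁
    have i2 := (dy_int hA hκ₂ ε).const_mul v₂
    have e1 : F ε = 1/2 * (v₁ * (∫ s in Set.Ioi (0:ℝ), (Θ (A * s * Real.exp (-ε)) * Θ (A * s * Real.exp ε) - 1) * dyW κ₁ s) -
        v₂ * (∫ s in Set.Ioi (0:ℝ), (Θ (A * s * Real.exp (-ε)) * Θ (A * s * Real.exp ε) - 1) * dyW κ₂ s)) := by
      simp only [F]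
      rw [← tsum_mul_left]
      refine Eq.trans (tsum_congr fun p => ?_) s3.tsum_eq
      simp only [f]; ring
    rw [e1, ← integral_const_mul, ← integral_const_mul, ← integral_sub i1 i2, ← integral_const_mul]
    refine integral_congr_ae (Eventually.of_forall fun s => ?_)
    simp only [hρ]; ring
  set U : Set ℂ := {z | |z.im| < 1} with hU
  have hUo : IsOpen U := isOpen_lt (continuous_abs.comp Complex.continuous_im) continuous_const
  have hUr : ∀ x : ℝ, (x : ℂ) ∈ U := fun x => by simp [hU]
  set φ : ℝ → ℂ → ℂ := fun s z => ((1/2 * ρ s : ℝ) : ℂ) * dyP A s z with hφ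
  have hloc : ∀ z0 ∈ U, ∃ r > 0, ∃ g : ℝ → ℝ,
      (∀ z ∈ Metric.ball z0 r, AEStronglyMeasurable (fun s => φ s z) (volume.restrict (Set.Ioi 0))) ∧
      (∀ᵐ s ∂(volume.restrict (Set.Ioi 0)), DifferentiableOn ℂ (φ s) (Metric.ball z0 r)) ∧
      (∀ᵐ s ∂(volume.restrict (Set.Ioi 0)), ∀ z ∈ Metric.ball z0 r, ‖φ s z‖ ≤ g s) ∧
      Integrable g (volume.restrict (Set.Ioi 0)) := by
    intro z0 hz0
    have hz0 : |z0.im| < 1 := hz0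
    have hin : ∀ z ∈ Metric.ball z0 (1 - |z0.im|), |z.im| < 1 ∧ |z.re| < |z0.re| + 1 := by
      intro z hz
      rw [Metric.mem_ball, dist_eq_norm] at hz
      have h1 := Complex.abs_im_le_norm (z - z0)
      have h2 := Complex.abs_re_le_norm (z - z0)
      rw [Complex.sub_im] at h1
      rw [Complex.sub_re] at h2
      have h3 := abs_sub_abs_le_abs_sub z.im z0.im
      have h4 := abs_sub_abs_le_abs_sub z.re z0.re
      have := abs_nonneg z0.im
      constructor <;> linarith
    have hc := Real.cos_one_pos
    set c := A * Real.exp (-(|z0.re| + 1)) * Real.cos 1 with hcdef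
    have hcpos : 0 < c := by positivity
    refine ⟨1 - |z0.im|, by linarith, fun s => 1/2 * (v₁ * (dyB c s * dyW κ₁ s) + v₂ * (dyB c s * dyW κ₂ s)),
      ?_, ?_, ?_, ?_⟩
    · intro z hz
      refine AEStronglyMeasurable.mul ?_ (dyP_meas hA (hin z hz).1)
      apply Measurable.aestronglyMeasurable
      fun_prop
    · filter_upwards [ae_restrict_mem measurableSet_Ioi] with s hs z hz
      exact ((dyP_diff hA hs (hin z hz).1).const_mul _).differentiableWithinAt
    · filter_upwards [ae_restrict_mem measurableSet_Ioi] with s hs z hz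
      have hs : 0 < s := hs
      have b := dyP_bound hA hs (hin z hz).1 (hin z hz).2
      rw [← hcdef] at b
      have b2 := hρb s hs
      simp only [hφ]
      rw [norm_mul, Complex.norm_real, norm_mul, Real.norm_eq_abs (ρ s)]
      have hB := dyB_nonneg hcpos hs
      calc ‖(1/2:ℝ)‖ * |ρ s| * ‖dyP A s z‖
          ≤ ‖(1/2:ℝ)‖ * (v₁ * dyW κ₁ s + v₂ * dyW κ₂ s) * dyB c s := by
            have := (abs_nonneg (ρ s)).trans b2
            gcongr
        _ = _ := by rw [Real.norm_of_nonneg (by norm_num)]; ring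
    · exact (((dyB_int κ₁ c hκ₁ hcpos).const_mul v₁).add
        ((dyB_int κ₂ c hκ₂ hcpos).const_mul v₂)).const_mul (1/2)
  set G : ℂ → ℂ := fun z => ∫ s in Set.Ioi (0:ℝ), φ s z with hG
  have hGd : DifferentiableOn ℂ G U := by
    intro z hz
    obtain ⟨r, hr, g, h1, h2, h3, h4⟩ := hloc z hz
    exact ((dy_param_step φ g z r hr h1 h2 h3 h4).2.2.2 z
      (Metric.mem_ball_self (half_pos hr))).differentiableAt.differentiableWithinAt
  have hGF : ∀ x : ℝ, (x:ℂ) ∈ U → G x = F x := by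
    intro x _
    rw [hF, ← integral_complex_ofReal]
    refine setIntegral_congr_fun measurableSet_Ioi fun s hs => ?_
    simp only [hφ]
    rw [dyP_ofReal hA hs]
    push_cast; ring
  have hder : ∀ n, iteratedDeriv n F 0 = ∫ s in Set.Ioi (0:ℝ), iteratedDeriv n
      (fun ε : ℝ => (1/2 * ρ s) * (Θ (A * s * Real.exp (-ε)) * Θ (A * s * Real.exp ε) - 1)) 0 := by
    intro n
    have h0 := dy_ofReal_iter n G F U hUo hGd hGF 0 (hUr 0)
    obtain ⟨r, hr, g, h1, h2, h3, h4⟩ := hloc ((0:ℝ):ℂ) (hUr 0)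
    have h5 := dy_param n φ g ((0:ℝ):ℂ) r hr h1 h2 h3 h4
    rw [← hG, h0] at h5
    apply Complex.ofReal_injective
    rw [h5, ← integral_complex_ofReal]
    refine setIntegral_congr_fun measurableSet_Ioi fun s hs => ?_
    refine dy_ofReal_iter n (φ s) _ U hUo ?_ ?_ 0 (hUr 0)
    · intro z hz
      exact ((dyP_diff hA hs hz).const_mul _).differentiableWithinAt
    · intro x _
      simp only [hφ]
      rw [dyP_ofReal hA hs]
      push_cast; ring
  refine ⟨?_, ?_, ?_, ?_⟩
  · rw [contDiff_iff_contDiffAt]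
    intro x
    exact dy_contDiff G F U hUo hGd x (hUr x) hGF
  · intro ε
    rw [hF, hF]
    refine integral_congr_ae (Eventually.of_forall fun s => ?_)
    simp only [neg_neg]; ring
  · rw [hder]
    refine setIntegral_congr_fun measurableSet_Ioi fun s hs => ?_
    have hs : 0 < s := hs
    rw [(dyq_derivs (mul_pos hA hs) _).1]; ring
  · rw [hder]
    refine setIntegral_congr_fun measurableSet_Ioi fun s hs => ?_
    have hs : 0 < s := hs
    rw [(dyq_derivs (mul_pos hA hs) _).2]; ring
end
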